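/- arXiv:2112.01248 — 2 statements merged into one kernel-verified Lean document; each statement's English description precedes it below -/
import Mathlib

section
/- Let a > 0. Every separated sequence Λ ⊂ ℝ with lower Beurling density D⁻(Λ) > 1 is a sampling sequence for the Gaussian shift-invariant space V²_a. -/
open Filter MeasureTheory

/-- `gaussShiftSum c coef x = ∑_{n∈ℤ} coef n · e^{-c(x-n)²}`, the generic element of the
Gaussian shift-invariant space `V²_c`. -/
noncomputable def gaussShiftSum (c : ℂ) (coef : ℤ → ℂ) (x : ℝ) : ℂ :=
  ∑' n : ℤ, coef n * Complex.exp (-c * ((x : ℂ) - (n : ℂ)) ^ 2)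

/-- A set `Λ ⊆ ℝ` is separated if distinct points are at distance at least some `ε > 0`. -/
def IsSeparatedSet (Λ : Set ℝ) : Prop :=
  ∃ ε > 0, ∀ x ∈ Λ, ∀ y ∈ Λ, x ≠ y → ε ≤ |x - y|

/-- `Λ` is a sampling sequence for `V²_c`:
`A‖f‖² ≤ ∑_{λ∈Λ} |f(λ)|² ≤ B‖f‖²`, where `‖f‖²_{V²} = ∑ |c_n|²`. -/
def IsSamplingV2 (c : ℂ) (Λ : Set ℝ) : Prop :=
  ∃ A > 0, ∃ B > 0, ∀ coef : ℤ → ℂ, Summable (fun n => ‖coef n‖ ^ 2) →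
    A * (∑' n : ℤ, ‖coef n‖ ^ 2) ≤ (∑' lam : Λ, ‖gaussShiftSum c coef (lam : ℝ)‖ ^ 2) ∧
    (∑' lam : Λ, ‖gaussShiftSum c coef (lam : ℝ)‖ ^ 2) ≤ B * (∑' n : ℤ, ‖coef n‖ ^ 2)

/-- `Λ` is an interpolating sequence for `V²_c`: every `ℓ²` data on `Λ` is interpolated by
some `f ∈ V²_c`. -/
def IsInterpolatingV2 (c : ℂ) (Λ : Set ℝ) : Prop :=
  ∀ a : Λ → ℂ, Summable (fun lam => ‖a lam‖ ^ 2) →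
    ∃ coef : ℤ → ℂ, Summable (fun n => ‖coef n‖ ^ 2) ∧
      ∀ lam : Λ, gaussShiftSum c coef (lam : ℝ) = a lam

/-- A complete interpolating sequence is one that is both sampling and interpolating. -/
def IsCompleteInterpolatingV2 (c : ℂ) (Λ : Set ℝ) : Prop :=
  IsSamplingV2 c Λ ∧ IsInterpolatingV2 c Λ

/-- Lower Beurling density `D⁻(Λ) = lim_{r→∞} inf_x card(Λ ∩ [x,x+r]) / r`. -/
noncomputable def lowerBeurlingDensity (Λ : Set ℝ) : ℝ :=
  liminf (fun r : ℝ => (⨅ x : ℝ, ((Λ ∩ Set.Icc x (x + r)).ncard : ℝ)) / r) atTop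

/-- Upper Beurling density `D⁺(Λ) = lim_{r→∞} sup_x card(Λ ∩ [x,x+r]) / r`. -/
noncomputable def upperBeurlingDensity (Λ : Set ℝ) : ℝ :=
  limsup (fun r : ℝ => (⨆ x : ℝ, ((Λ ∩ Set.Icc x (x + r)).ncard : ℝ)) / r) atTop

/-!
For every `n` some coefficient `c_k` dominates `c_n` up to the factor `e^{-s|n-k|}` and every `c_m`
up to `e^{s|m-k|}`, so after an integer translation it suffices to bound a dominant `c₀` by one
nearby sample. Up to the factor `e^{-γx²}`, the function is `H(e^{2γx})` for the Laurent series
`H(w) = ∑ₙ cₙ e^{-γn²} wⁿ`, and a growth of `|cₙ|` of order `|c₀| e^{s|n|}` makes `H` at most of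
order `|c₀| e^{aT² + sT}` on the circles `|w| = e^{±2aT}`, where `a = Re γ`. Density above `1` gives
more than `2T` points in `[-T, T]`, with a proportional excess. Were `H` to vanish at all of them,
a Jensen-type argument in the annulus `e^{-2aT} ≤ |w| ≤ e^{2aT}` would force `H` on the unit
circle, and with it `c₀`, to be smaller than `|c₀|` once `T` is large. Correcting `H` by a Lagrange
interpolant extends this to small values, so one of the samples is comparable with `c₀`. The
upper bound, and the summation of the local lower bounds, follow from Schur's test.
-/

/-! ### Exponential sums over separated families -/

theorem summable_exp_neg_mul_abs_intCast {s : ℝ} (hs : 0 < s) :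
    Summable fun m : ℤ => Real.exp (-s * |(m : ℝ)|) := by
  have hgeom : Summable fun n : ℕ => Real.exp (-s * n) :=
    Real.summable_exp_nat_mul_iff.mpr (neg_neg_iff_pos.mpr hs) |>.congr fun n => by ring_nf
  refine Summable.of_nat_of_neg (hgeom.congr fun n => ?_) (hgeom.congr fun n => ?_) <;> simp

theorem pairwise_one_le_abs_intCast_sub : Pairwise fun m n : ℤ => (1 : ℝ) ≤ |(m : ℝ) - n| :=
  fun _ _ hmn => mod_cast Int.one_le_abs (sub_ne_zero.mpr hmn)

theorem abs_intFloor_le (t : ℝ) : |(⌊t⌋ : ℝ)| ≤ |t| + 1 := by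
  have h₁ := Int.floor_le t
  have h₂ := Int.lt_floor_add_one t
  rw [abs_le]
  constructor <;> cases abs_cases t <;> linarith

section SeparatedFamily

variable {ι : Type*} {x : ι → ℝ} {ε : ℝ}

theorem injective_floor_sub_div (hε : 0 < ε) (hx : Pairwise fun i j => ε ≤ |x i - x j|) (y : ℝ) :
    Function.Injective fun i => ⌊(x i - y) / ε⌋ := by
  intro i j hij
  by_contra hne
  have hlt := Int.abs_sub_lt_one_of_floor_eq_floor hij
  rw [← sub_div, sub_sub_sub_cancel_right, abs_div, abs_of_pos hε, div_lt_one hε] at hlt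
  exact hlt.not_ge (hx hne)

theorem exists_tsum_exp_neg_mul_abs_sub_le {s : ℝ} (hs : 0 < s) (hε : 0 < ε)
    (hx : Pairwise fun i j => ε ≤ |x i - x j|) :
    ∃ C, 0 < C ∧ ∀ y, Summable (fun i => Real.exp (-s * |x i - y|)) ∧
      ∑' i, Real.exp (-s * |x i - y|) ≤ C := by
  have hsum := (summable_exp_neg_mul_abs_intCast (mul_pos hs hε)).mul_left (Real.exp (s * ε))
  refine ⟨∑' m : ℤ, Real.exp (s * ε) * Real.exp (-(s * ε) * |(m : ℝ)|),
    hsum.tsum_pos (fun _ => by positivity) 0 (by positivity), fun y => ?_⟩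
  have hinj := injective_floor_sub_div hε hx y
  have hle (i : ι) : Real.exp (-s * |x i - y|) ≤
      Real.exp (s * ε) * Real.exp (-(s * ε) * |(⌊(x i - y) / ε⌋ : ℝ)|) := by
    rw [← Real.exp_add, Real.exp_le_exp]
    have hfloor := mul_le_mul_of_nonneg_left (abs_intFloor_le ((x i - y) / ε)) (mul_pos hs hε).le
    rw [abs_div, abs_of_pos hε] at hfloor
    have hcancel : s * ε * (|x i - y| / ε + 1) = s * |x i - y| + s * ε := by field_simp
    linarith
  have hsummable : Summable fun i => Real.exp (-s * |x i - y|) :=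
    Summable.of_nonneg_of_le (fun _ => (Real.exp_pos _).le) hle (hsum.comp_injective hinj)
  exact ⟨hsummable, Summable.tsum_le_tsum_of_inj _ hinj (fun _ _ => by positivity) hle
    hsummable hsum⟩

theorem mul_abs_sub_mul_sq_le {a : ℝ} (ha : 0 < a) (s t : ℝ) :
    s * |t| - a * t ^ 2 ≤ (s + 1) ^ 2 / (4 * a) + -1 * |t| := by
  have hsq : (s + 1) ^ 2 / (4 * a) - (s + 1) * |t| + a * t ^ 2 =
      (s + 1 - 2 * a * |t|) ^ 2 / (4 * a) := by
    rw [← sq_abs t]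
    field_simp
    ring
  have : 0 ≤ (s + 1 - 2 * a * |t|) ^ 2 / (4 * a) := by positivity
  linarith

theorem exists_tsum_exp_mul_abs_sub_mul_sq_le {a : ℝ} (ha : 0 < a) (s : ℝ) (hε : 0 < ε)
    (hx : Pairwise fun i j => ε ≤ |x i - x j|) :
    ∃ C, 0 < C ∧ ∀ y, Summable (fun i => Real.exp (s * |x i - y| - a * (x i - y) ^ 2)) ∧
      ∑' i, Real.exp (s * |x i - y| - a * (x i - y) ^ 2) ≤ C := by
  obtain ⟨C, hC, h⟩ := exists_tsum_exp_neg_mul_abs_sub_le one_pos hε hx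
  refine ⟨Real.exp ((s + 1) ^ 2 / (4 * a)) * C, by positivity, fun y => ?_⟩
  have hle (i : ι) : Real.exp (s * |x i - y| - a * (x i - y) ^ 2) ≤
      Real.exp ((s + 1) ^ 2 / (4 * a)) * Real.exp (-1 * |x i - y|) := by
    rw [← Real.exp_add, Real.exp_le_exp]
    exact mul_abs_sub_mul_sq_le ha s _
  have hmaj := (h y).1.mul_left (Real.exp ((s + 1) ^ 2 / (4 * a)))
  have hsummable := Summable.of_nonneg_of_le (fun _ => (Real.exp_pos _).le) hle hmaj
  refine ⟨hsummable, (hsummable.tsum_le_tsum hle hmaj).trans ?_⟩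
  rw [tsum_mul_left]
  exact mul_le_mul_of_nonneg_left (h y).2 (Real.exp_pos _).le

end SeparatedFamily

/-! ### Schur's test and the Cauchy–Schwarz inequality -/

section Schur

variable {α β : Type*} {u : α → ℝ} {K : α → β → ℝ} {C : ℝ}

theorem summable_prod_mul_of_tsum_le (hu : ∀ i, 0 ≤ u i) (hus : Summable u)
    (hK : ∀ i j, 0 ≤ K i j) (hKs : ∀ i, Summable (K i)) (hC : ∀ i, ∑' j, K i j ≤ C) :
    Summable fun p : α × β => u p.1 * K p.1 p.2 := by
  refine (summable_prod_of_nonneg (f := fun p : α × β => u p.1 * K p.1 p.2)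
    fun p => mul_nonneg (hu p.1) (hK p.1 p.2)).mpr ⟨fun i => (hKs i).mul_left (u i), ?_⟩
  simp only [tsum_mul_left]
  exact Summable.of_nonneg_of_le (fun i => mul_nonneg (hu i) (tsum_nonneg (hK i)))
    (fun i => mul_le_mul_of_nonneg_left (hC i) (hu i)) (hus.mul_right C)

theorem summable_and_tsum_le_of_le_tsum_mul {v : β → ℝ} {A : ℝ} (hu : ∀ i, 0 ≤ u i)
    (hus : Summable u) (hK : ∀ i j, 0 ≤ K i j) (hKs : ∀ i, Summable (K i))
    (hC : ∀ i, ∑' j, K i j ≤ C) (hA : 0 ≤ A) (hv : ∀ j, 0 ≤ v j)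
    (hvle : ∀ j, v j ≤ A * ∑' i, u i * K i j) :
    Summable v ∧ ∑' j, v j ≤ A * (C * ∑' i, u i) := by
  have hprod := summable_prod_mul_of_tsum_le hu hus hK hKs hC
  have hswap : Summable fun p : β × α => u p.2 * K p.2 p.1 :=
    (Equiv.prodComm β α).summable_iff.mpr hprod
  have hmaj : Summable fun j => A * ∑' i, u i * K i j := hswap.prod.mul_left A
  have hvs : Summable v := Summable.of_nonneg_of_le hv hvle hmaj
  refine ⟨hvs, ?_⟩
  calc ∑' j, v j ≤ ∑' j, A * ∑' i, u i * K i j := hvs.tsum_le_tsum hvle hmaj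
    _ = A * ∑' i, ∑' j, u i * K i j := by
      rw [tsum_mul_left, hprod.tsum_comm (f := fun i j => u i * K i j)]
    _ ≤ A * ∑' i, u i * C := by
      gcongr with i
      · exact hprod.prod
      · exact hus.mul_right C
      · rw [tsum_mul_left]
        exact mul_le_mul_of_nonneg_left (hC i) (hu i)
    _ = A * (C * ∑' i, u i) := by rw [tsum_mul_right, mul_comm C]

end Schur

theorem sq_tsum_mul_le {ι : Type*} {u h : ι → ℝ} (hu : ∀ i, 0 ≤ u i) (hh : ∀ i, 0 ≤ h i)
    (hhs : Summable h) (huh : Summable fun i => u i ^ 2 * h i) :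
    (Summable fun i => u i * h i) ∧
      (∑' i, u i * h i) ^ 2 ≤ (∑' i, h i) * ∑' i, u i ^ 2 * h i := by
  have hsqrt (i : ι) : √(h i) ^ (2 : ℝ) = h i := by rw [Real.rpow_two, Real.sq_sqrt (hh i)]
  have husqrt (i : ι) : (u i * √(h i)) ^ (2 : ℝ) = u i ^ 2 * h i := by
    rw [Real.rpow_two, mul_pow, Real.sq_sqrt (hh i)]
  have hmul (i : ι) : u i * √(h i) * √(h i) = u i * h i := by
    rw [mul_assoc, Real.mul_self_sqrt (hh i)]
  obtain ⟨hs, hle⟩ := Real.summable_and_inner_le_Lp_mul_Lq_tsum_of_nonneg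
    Real.HolderConjugate.two_two
    (fun i => mul_nonneg (hu i) (Real.sqrt_nonneg (h i))) (fun i => Real.sqrt_nonneg (h i))
    (by simpa only [husqrt] using huh) (by simpa only [hsqrt] using hhs)
  simp only [hmul, husqrt, hsqrt, ← Real.sqrt_eq_rpow] at hs hle
  rw [← Real.sqrt_mul (tsum_nonneg fun i => mul_nonneg (sq_nonneg _) (hh i)), mul_comm] at hle
  refine ⟨hs, (Real.le_sqrt (tsum_nonneg fun i => mul_nonneg (hu i) (hh i)) ?_).mp hle⟩
  exact mul_nonneg (tsum_nonneg hh) (tsum_nonneg fun i => mul_nonneg (sq_nonneg _) (hh i))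

/-! ### Holomorphic functions with many zeros in an annulus -/

theorem exists_eq_prod_sub_mul {ι : Type*} {U : Set ℂ} (hU : IsOpen U) (v : ι → ℂ)
    (S : Finset ι) (hvU : ∀ i ∈ S, v i ∈ U) (hv : Set.InjOn v S) {H : ℂ → ℂ}
    (hH : DifferentiableOn ℂ H U) (hzero : ∀ i ∈ S, H (v i) = 0) :
    ∃ Q : ℂ → ℂ, DifferentiableOn ℂ Q U ∧ ∀ w, H w = (∏ i ∈ S, (w - v i)) * Q w := by
  classical
  induction S using Finset.induction_on generalizing H with
  | empty => exact ⟨H, hH, by simp⟩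
  | insert i S hi ih =>
    simp only [Finset.mem_insert, forall_eq_or_imp] at hvU hzero
    have hfactor (w : ℂ) : H w = (w - v i) * dslope H (v i) w := by
      simpa [hzero.1] using (sub_smul_dslope H (v i) w).symm
    have hzero' (j : ι) (hj : j ∈ S) : dslope H (v i) (v j) = 0 := by
      have hne : v j ≠ v i := fun h =>
        hi (hv (Finset.mem_insert_of_mem hj) (Finset.mem_insert_self i S) h ▸ hj)
      exact (mul_eq_zero.mp ((hfactor _).symm.trans (hzero.2 j hj))).resolve_left
        (sub_ne_zero.mpr hne)
    obtain ⟨Q, hQ, hHQ⟩ := ih hvU.2 (hv.mono (Finset.subset_insert i S))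
      ((Complex.differentiableOn_dslope (hU.mem_nhds hvU.1)).mpr hH) hzero'
    exact ⟨Q, hQ, fun w => by rw [hfactor, hHQ, Finset.prod_insert hi, mul_assoc]⟩

theorem norm_le_of_norm_le_on_annulus_boundary {r R C : ℝ} {Q : ℂ → ℂ}
    (hQ : DifferentiableOn ℂ Q {w | ‖w‖ ∈ Set.Icc r R}) (hr : ∀ w, ‖w‖ = r → ‖Q w‖ ≤ C)
    (hR : ∀ w, ‖w‖ = R → ‖Q w‖ ≤ C) {w : ℂ} (hw : ‖w‖ ∈ Set.Ioo r R) : ‖Q w‖ ≤ C := by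
  have hopen : IsOpen {w : ℂ | ‖w‖ ∈ Set.Ioo r R} := isOpen_Ioo.preimage continuous_norm
  have hclosure : closure {w : ℂ | ‖w‖ ∈ Set.Ioo r R} ⊆ {w | ‖w‖ ∈ Set.Icc r R} :=
    closure_minimal (fun _ h => Set.Ioo_subset_Icc_self h) (isClosed_Icc.preimage continuous_norm)
  refine Complex.norm_le_of_forall_mem_frontier_norm_le (U := {w | ‖w‖ ∈ Set.Ioo r R})
    ?_ (hQ.mono hclosure).diffContOnCl (fun z hz => ?_) (subset_closure hw)
  · exact Metric.isBounded_closedBall.subset fun z hz => mem_closedBall_zero_iff.mpr hz.2.le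
  · rw [hopen.frontier_eq] at hz
    obtain ⟨hrz, hzR⟩ := hclosure hz.1
    by_contra! hlt
    exact hz.2 ⟨hrz.lt_of_ne fun h => hlt.not_ge (hr z h.symm),
      hzR.lt_of_ne fun h => hlt.not_ge (hR z h)⟩

theorem prod_max_one_eq_prod_mul {ι : Type*} (S : Finset ι) {t : ι → ℝ} (ht : ∀ i ∈ S, 0 < t i) :
    ∏ i ∈ S, max (t i) 1 = (∏ i ∈ S, t i) * ∏ i ∈ S, max (t i)⁻¹ 1 := by
  rw [← Finset.prod_mul_distrib]
  refine Finset.prod_congr rfl fun i hi => ?_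
  rw [mul_max_of_nonneg _ _ (ht i hi).le, mul_inv_cancel₀ (ht i hi).ne', mul_one, max_comm]

section AnnulusZeros

variable {ι : Type*} {S : Finset ι} {v : ι → ℂ} {κ R G M : ℝ} {p : ℕ}

theorem pow_card_mul_pow_card_le_prod_norm_sub (hκ : 0 < κ) (hR : 0 < R)
    (houter : ∀ i ∈ S, ‖v i‖ ≤ (1 - κ) * R) {w : ℂ} (hw : ‖w‖ = R) :
    (κ * R) ^ S.card ≤ ∏ i ∈ S, ‖w - v i‖ := by
  rw [← Finset.prod_const]
  refine Finset.prod_le_prod (fun _ _ => by positivity) fun i hi => ?_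
  have := norm_sub_norm_le w (v i)
  have := houter i hi
  linarith

theorem pow_card_mul_prod_norm_le_prod_norm_sub (hκ : 0 < κ) {r : ℝ}
    (hinner : ∀ i ∈ S, r ≤ (1 - κ) * ‖v i‖) {w : ℂ} (hw : ‖w‖ = r) :
    κ ^ S.card * ∏ i ∈ S, ‖v i‖ ≤ ∏ i ∈ S, ‖w - v i‖ := by
  rw [← Finset.prod_const, ← Finset.prod_mul_distrib]
  refine Finset.prod_le_prod (fun _ _ => by positivity) fun i hi => ?_
  have := norm_sub_norm_le (v i) w
  have := hinner i hi
  rw [norm_sub_rev]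
  linarith

theorem prod_norm_sub_le_pow_card_mul_prod_max {w : ℂ} (hw : ‖w‖ = 1) :
    ∏ i ∈ S, ‖w - v i‖ ≤ 2 ^ S.card * ∏ i ∈ S, max ‖v i‖ 1 := by
  rw [← Finset.prod_const, ← Finset.prod_mul_distrib]
  refine Finset.prod_le_prod (fun _ _ => norm_nonneg _) fun i _ => ?_
  linarith [norm_sub_le w (v i), le_max_left ‖v i‖ 1, le_max_right ‖v i‖ 1]

/-- Because the number `2 * p` of zeros is even, the factor `w ^ p` gives the quotient by the zeros
the same bound on both boundary circles. -/
theorem norm_quotient_le_of_zeros_in_annulus (hκ : 0 < κ) (hR : 1 < R) (hcard : S.card = 2 * p)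
    (hv₀ : ∀ i ∈ S, v i ≠ 0) (hinner : ∀ i ∈ S, R⁻¹ ≤ (1 - κ) * ‖v i‖)
    (houter : ∀ i ∈ S, ‖v i‖ ≤ (1 - κ) * R) (hG : ∏ i ∈ S, max ‖v i‖ 1 ≤ G)
    (hG' : ∏ i ∈ S, max ‖v i‖⁻¹ 1 ≤ G) {Q : ℂ → ℂ} (hQ : DifferentiableOn ℂ Q {0}ᶜ)
    (hM : ∀ w, ‖w‖ = R⁻¹ → (∏ i ∈ S, ‖w - v i‖) * ‖Q w‖ ≤ M)
    (hM' : ∀ w, ‖w‖ = R → (∏ i ∈ S, ‖w - v i‖) * ‖Q w‖ ≤ M) {w : ℂ} (hw : ‖w‖ = 1) :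
    ‖Q w‖ ≤ G * M / ((κ ^ 2 * R) ^ p * ∏ i ∈ S, max ‖v i‖ 1) := by
  have hR₀ : 0 < R := one_pos.trans hR
  have hDpos : 0 < ∏ i ∈ S, max ‖v i‖ 1 := Finset.prod_pos fun _ _ => lt_max_of_lt_right one_pos
  have hG₀ : 0 ≤ G := hDpos.le.trans hG
  have houter_circle (z : ℂ) (hz : ‖z‖ = R) :
      ‖z ^ p * Q z‖ ≤ G * M / ((κ ^ 2 * R) ^ p * ∏ i ∈ S, max ‖v i‖ 1) := by
    rw [le_div_iff₀ (by positivity)]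
    calc ‖z ^ p * Q z‖ * ((κ ^ 2 * R) ^ p * ∏ i ∈ S, max ‖v i‖ 1)
        = (∏ i ∈ S, max ‖v i‖ 1) * ((κ * R) ^ S.card * ‖Q z‖) := by
          rw [norm_mul, norm_pow, hz, hcard]; ring
      _ ≤ G * M := mul_le_mul hG ((mul_le_mul_of_nonneg_right
          (pow_card_mul_pow_card_le_prod_norm_sub hκ hR₀ houter hz) (norm_nonneg _)).trans
          (hM' z hz)) (by positivity) hG₀
  have hinner_circle (z : ℂ) (hz : ‖z‖ = R⁻¹) :
      ‖z ^ p * Q z‖ ≤ G * M / ((κ ^ 2 * R) ^ p * ∏ i ∈ S, max ‖v i‖ 1) := by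
    rw [le_div_iff₀ (by positivity)]
    calc ‖z ^ p * Q z‖ * ((κ ^ 2 * R) ^ p * ∏ i ∈ S, max ‖v i‖ 1)
        = (∏ i ∈ S, max ‖v i‖⁻¹ 1) * (κ ^ S.card * (∏ i ∈ S, ‖v i‖) * ‖Q z‖) := by
          rw [norm_mul, norm_pow, hz, hcard, pow_mul,
            prod_max_one_eq_prod_mul S fun i hi => norm_pos_iff.mpr (hv₀ i hi), mul_pow, inv_pow]
          field_simp
      _ ≤ G * M := mul_le_mul hG' ((mul_le_mul_of_nonneg_right
          (pow_card_mul_prod_norm_le_prod_norm_sub hκ hinner hz) (norm_nonneg _)).trans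
          (hM z hz)) (by positivity) hG₀
  have hdiff : DifferentiableOn ℂ (fun z => z ^ p * Q z) {z | ‖z‖ ∈ Set.Icc R⁻¹ R} :=
    ((differentiableOn_id.pow p).mul hQ).mono fun z hz =>
      norm_pos_iff.mp ((inv_pos.mpr hR₀).trans_le hz.1)
  simpa [hw] using norm_le_of_norm_le_on_annulus_boundary hdiff hinner_circle houter_circle
    (w := w) (by simp [hw, hR, inv_lt_one_of_one_lt₀ hR])

theorem norm_le_of_zeros_in_annulus (hκ : 0 < κ) (hR : 1 < R) (hcard : S.card = 2 * p)
    (hv : Set.InjOn v S) (hinner : ∀ i ∈ S, R⁻¹ ≤ (1 - κ) * ‖v i‖)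
    (houter : ∀ i ∈ S, ‖v i‖ ≤ (1 - κ) * R) (hG : ∏ i ∈ S, max ‖v i‖ 1 ≤ G)
    (hG' : ∏ i ∈ S, max ‖v i‖⁻¹ 1 ≤ G) {H : ℂ → ℂ} (hH : DifferentiableOn ℂ H {0}ᶜ)
    (hzero : ∀ i ∈ S, H (v i) = 0) (hM : ∀ w, ‖w‖ = R⁻¹ → ‖H w‖ ≤ M)
    (hM' : ∀ w, ‖w‖ = R → ‖H w‖ ≤ M) {w : ℂ} (hw : ‖w‖ = 1) :
    ‖H w‖ ≤ (4 / (κ ^ 2 * R)) ^ p * G * M := by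
  have hR₀ : 0 < R := one_pos.trans hR
  have hv₀ (i : ι) (hi : i ∈ S) : v i ≠ 0 := by
    intro h
    have := hinner i hi
    rw [h, norm_zero, mul_zero] at this
    exact this.not_gt (inv_pos.mpr hR₀)
  obtain ⟨Q, hQ, hHQ⟩ := exists_eq_prod_sub_mul isOpen_compl_singleton v S hv₀ hv hH hzero
  have hnorm (z : ℂ) : ‖H z‖ = (∏ i ∈ S, ‖z - v i‖) * ‖Q z‖ := by
    rw [hHQ, norm_mul, norm_prod]
  simp only [hnorm] at hM hM' ⊢
  have : 0 < ∏ i ∈ S, max ‖v i‖ 1 := Finset.prod_pos fun _ _ => lt_max_of_lt_right one_pos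
  calc (∏ i ∈ S, ‖w - v i‖) * ‖Q w‖
      ≤ (2 ^ S.card * ∏ i ∈ S, max ‖v i‖ 1) *
          (G * M / ((κ ^ 2 * R) ^ p * ∏ i ∈ S, max ‖v i‖ 1)) :=
        mul_le_mul (prod_norm_sub_le_pow_card_mul_prod_max hw)
          (norm_quotient_le_of_zeros_in_annulus hκ hR hcard hv₀ hinner houter hG hG' hQ hM hM' hw)
          (norm_nonneg _) (by positivity)
    _ = (4 / (κ ^ 2 * R)) ^ p * G * M := by
        rw [hcard, pow_mul, div_pow]
        norm_num
        field_simp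

end AnnulusZeros

theorem norm_eval_lagrangeBasis_le {ι F : Type*} [DecidableEq ι] [NormedField F] {S : Finset ι}
    {v : ι → F} {ρ R : ℝ} (hρ : 0 < ρ) (hsep : ∀ i ∈ S, ∀ j ∈ S, i ≠ j → ρ ≤ ‖v i - v j‖)
    (hvR : ∀ i ∈ S, ‖v i‖ ≤ R) {w : F} (hw : ‖w‖ ≤ R) {i : ι} (hi : i ∈ S) :
    ‖(Lagrange.basis S v i).eval w‖ ≤ (1 + 2 * R / ρ) ^ S.card := by
  have hR : 0 ≤ R := (norm_nonneg w).trans hw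
  have hfactor (j : ι) (hj : j ∈ S.erase i) :
      ‖(Lagrange.basisDivisor (v i) (v j)).eval w‖ ≤ 1 + 2 * R / ρ := by
    obtain ⟨hji, hj⟩ := Finset.mem_erase.mp hj
    have hnum : ‖w - v j‖ ≤ 2 * R := (norm_sub_le _ _).trans (by linarith [hvR j hj])
    calc ‖(Lagrange.basisDivisor (v i) (v j)).eval w‖ = ‖w - v j‖ / ‖v i - v j‖ := by
          simp [Lagrange.basisDivisor, inv_mul_eq_div]
      _ ≤ 2 * R / ρ := div_le_div₀ (by positivity) hnum hρ (hsep i hi j hj hji.symm)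
      _ ≤ 1 + 2 * R / ρ := le_add_of_nonneg_left zero_le_one
  rw [Lagrange.basis, Polynomial.eval_prod, norm_prod]
  refine (Finset.prod_le_prod (fun _ _ => norm_nonneg _) hfactor).trans ?_
  rw [Finset.prod_const]
  exact pow_le_pow_right₀ (le_add_of_nonneg_right (by positivity))
    (Finset.card_le_card (Finset.erase_subset i S))

theorem norm_eval_lagrangeInterpolate_le {ι F : Type*} [DecidableEq ι] [NormedField F]
    {S : Finset ι} {v r : ι → F} {ρ R δ : ℝ} (hρ : 0 < ρ)
    (hsep : ∀ i ∈ S, ∀ j ∈ S, i ≠ j → ρ ≤ ‖v i - v j‖) (hvR : ∀ i ∈ S, ‖v i‖ ≤ R)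
    (hr : ∀ i ∈ S, ‖r i‖ ≤ δ) {w : F} (hw : ‖w‖ ≤ R) :
    ‖(Lagrange.interpolate S v r).eval w‖ ≤ S.card * (1 + 2 * R / ρ) ^ S.card * δ := by
  rw [Lagrange.interpolate_apply, Polynomial.eval_finsetSum]
  have hterm (i : ι) (hi : i ∈ S) :
      ‖(Polynomial.C (r i) * Lagrange.basis S v i).eval w‖ ≤ (1 + 2 * R / ρ) ^ S.card * δ := by
    rw [Polynomial.eval_mul, Polynomial.eval_C, norm_mul, mul_comm]
    exact mul_le_mul (norm_eval_lagrangeBasis_le hρ hsep hvR hw hi) (hr i hi) (norm_nonneg _)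
      ((norm_nonneg _).trans (norm_eval_lagrangeBasis_le hρ hsep hvR hw hi))
  calc ‖∑ i ∈ S, (Polynomial.C (r i) * Lagrange.basis S v i).eval w‖
      ≤ ∑ i ∈ S, ‖(Polynomial.C (r i) * Lagrange.basis S v i).eval w‖ := norm_sum_le _ _
    _ ≤ S.card • ((1 + 2 * R / ρ) ^ S.card * δ) := Finset.sum_le_card_nsmul _ _ _ hterm
    _ = S.card * (1 + 2 * R / ρ) ^ S.card * δ := by rw [nsmul_eq_mul, mul_assoc]

/-- Subtracting the Lagrange interpolant turns small values at the nodes into exact zeros. -/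
theorem norm_le_of_small_values_in_annulus {ι : Type*} {S : Finset ι} {v : ι → ℂ}
    {κ R G M ρ δ : ℝ} {p : ℕ} (hκ : 0 < κ) (hR : 1 < R) (hcard : S.card = 2 * p) (hρ : 0 < ρ)
    (hsep : ∀ i ∈ S, ∀ j ∈ S, i ≠ j → ρ ≤ ‖v i - v j‖) (hinner : ∀ i ∈ S, R⁻¹ ≤ (1 - κ) * ‖v i‖)
    (houter : ∀ i ∈ S, ‖v i‖ ≤ (1 - κ) * R) (hG : ∏ i ∈ S, max ‖v i‖ 1 ≤ G)
    (hG' : ∏ i ∈ S, max ‖v i‖⁻¹ 1 ≤ G) {H : ℂ → ℂ} (hH : DifferentiableOn ℂ H {0}ᶜ)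
    (hδ : ∀ i ∈ S, ‖H (v i)‖ ≤ δ) (hM : ∀ w, ‖w‖ = R⁻¹ → ‖H w‖ ≤ M)
    (hM' : ∀ w, ‖w‖ = R → ‖H w‖ ≤ M) {w : ℂ} (hw : ‖w‖ = 1) :
    ‖H w‖ ≤ (4 / (κ ^ 2 * R)) ^ p * G * M +
      ((4 / (κ ^ 2 * R)) ^ p * G + 1) * (S.card * (1 + 2 * R / ρ) ^ S.card) * δ := by
  classical
  have hinj : Set.InjOn v S := fun i hi j hj hij => by
    by_contra hne
    exact hρ.not_ge (by simpa [hij] using hsep i hi j hj hne)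
  have hvR (i : ι) (hi : i ∈ S) : ‖v i‖ ≤ R := (houter i hi).trans (by nlinarith)
  set P := Lagrange.interpolate S v fun i => H (v i)
  set e := S.card * (1 + 2 * R / ρ) ^ S.card * δ with he
  have hP (z : ℂ) (hz : ‖z‖ ≤ R) : ‖P.eval z‖ ≤ e :=
    norm_eval_lagrangeInterpolate_le hρ hsep hvR hδ hz
  have hbound := norm_le_of_zeros_in_annulus (M := M + e) (H := fun z => H z - P.eval z)
    hκ hR hcard hinj hinner houter hG hG' (hH.sub P.differentiable.differentiableOn)
    (fun i hi => sub_eq_zero.mpr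
      (Lagrange.eval_interpolate_at_node (fun i => H (v i)) hinj hi).symm)
    (fun z hz => norm_sub_le_of_le (hM z hz)
      (hP z (hz.le.trans ((inv_lt_one_of_one_lt₀ hR).trans hR).le)))
    (fun z hz => norm_sub_le_of_le (hM' z hz) (hP z hz.le)) hw
  calc ‖H w‖ = ‖H w - P.eval w + P.eval w‖ := by rw [sub_add_cancel]
    _ ≤ (4 / (κ ^ 2 * R)) ^ p * G * (M + e) + e :=
      norm_add_le_of_le hbound (hP w (hw.trans_le hR.le))
    _ = _ := by rw [he]; ring

/-! ### Laurent series -/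

theorem differentiableOn_tsum_zpow {b : ℤ → ℂ}
    (hb : ∀ r : ℝ, 0 < r → Summable fun n => ‖b n‖ * r ^ n) :
    DifferentiableOn ℂ (fun w => ∑' n, b n * w ^ n) {0}ᶜ := by
  intro w hw
  have hw₀ : 0 < ‖w‖ := norm_pos_iff.mpr hw
  set U : Set ℂ := (fun z => ‖z‖) ⁻¹' Set.Ioo (‖w‖ / 2) (2 * ‖w‖)
  have hU : IsOpen U := isOpen_Ioo.preimage continuous_norm
  have hpos {z : ℂ} (hz : z ∈ U) : 0 < ‖z‖ := (half_pos hw₀).trans hz.1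
  have hdiff : DifferentiableOn ℂ (fun w => ∑' n, b n * w ^ n) U := by
    refine Complex.differentiableOn_tsum_of_summable_norm
      ((hb (‖w‖ / 2) (by positivity)).add (hb (2 * ‖w‖) (by positivity)))
      (fun n z hz => ?_) hU fun n z hz => ?_
    · exact ((differentiableAt_zpow.mpr (Or.inl (norm_pos_iff.mp (hpos hz)))).const_mul
        _).differentiableWithinAt
    · rw [norm_mul, norm_zpow, ← mul_add]
      refine mul_le_mul_of_nonneg_left ?_ (norm_nonneg _)
      obtain ⟨k, rfl | rfl⟩ := n.eq_nat_or_neg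
      · exact (zpow_le_zpow_left₀ k.cast_nonneg (hpos hz).le hz.2.le).trans
          (le_add_of_nonneg_left (by positivity))
      · simp only [zpow_neg, zpow_natCast]
        exact (inv_anti₀ (by positivity) (pow_le_pow_left₀ (by positivity) hz.1.le k)).trans
          (le_add_of_nonneg_right (by positivity))
  exact (hdiff.differentiableAt (hU.mem_nhds ⟨by linarith, by linarith⟩)).differentiableWithinAt

theorem circleIntegral_zpow_sub_one (n : ℤ) :
    (∮ z in C(0, 1), z ^ (n - 1)) = if n = 0 then 2 * Real.pi * Complex.I else 0 := by
  split_ifs with hn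
  · simpa [hn] using circleIntegral.integral_sub_center_inv 0 one_ne_zero
  · simpa using circleIntegral.integral_sub_zpow_of_ne (n := n - 1) (by omega) 0 0 1

theorem circleIntegral_tsum_zpow_sub_one {b : ℤ → ℂ} (hb : Summable fun n => ‖b n‖) :
    (∮ z in C(0, 1), ∑' n, b n * z ^ (n - 1)) = 2 * Real.pi * Complex.I * b 0 := by
  have hcont (n : ℤ) : ContinuousOn (fun z => b n * z ^ (n - 1)) (Metric.sphere (0 : ℂ) 1) :=
    continuousOn_const.mul (continuousOn_id.zpow₀ _ fun z hz =>
      Or.inl (ne_zero_of_mem_unit_sphere ⟨z, hz⟩))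
  have hpartial (s : Finset ℤ) (hs : 0 ∈ s) :
      (∮ z in C(0, 1), ∑ n ∈ s, b n * z ^ (n - 1)) = 2 * Real.pi * Complex.I * b 0 := by
    rw [circleIntegral.integral_fun_sum fun n _ => (hcont n).circleIntegrable zero_le_one]
    simp [circleIntegral.integral_const_mul, circleIntegral_zpow_sub_one, hs, mul_comm]
  have huniform := tendstoUniformlyOn_tsum (f := fun n (z : ℂ) => b n * z ^ (n - 1)) hb
    (s := Metric.sphere 0 1) fun n z hz => by simp [mem_sphere_zero_iff_norm.mp hz]
  refine tendsto_nhds_unique (huniform.tendsto_circleIntegral_of_continuousOn zero_le_one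
    (Eventually.of_forall fun s => continuousOn_finsetSum s fun n _ => hcont n)) ?_
  exact tendsto_const_nhds.congr' ((eventually_ge_atTop {0}).mono fun s hs =>
    (hpartial s (hs (Finset.mem_singleton_self 0))).symm)

theorem norm_coeff_zero_le_of_norm_tsum_zpow_le {b : ℤ → ℂ} {B : ℝ}
    (hb : Summable fun n => ‖b n‖) (hB : ∀ w : ℂ, ‖w‖ = 1 → ‖∑' n, b n * w ^ n‖ ≤ B) :
    ‖b 0‖ ≤ B := by
  have hcauchy := circleIntegral.norm_two_pi_i_inv_smul_integral_le_of_norm_le_const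
    (f := fun z => ∑' n, b n * z ^ (n - 1)) (c := 0) zero_le_one fun z hz => by
      have hz₁ : ‖z‖ = 1 := mem_sphere_zero_iff_norm.mp hz
      have hz₀ : z ≠ 0 := ne_zero_of_mem_unit_sphere ⟨z, hz⟩
      simp only [zpow_sub_one₀ hz₀, ← mul_assoc, tsum_mul_right, norm_mul, norm_inv, hz₁, inv_one,
        mul_one]
      exact hB z hz₁
  rwa [circleIntegral_tsum_zpow_sub_one hb, smul_eq_mul,
    inv_mul_cancel_left₀ Complex.two_pi_I_ne_zero, one_mul] at hcauchy

/-! ### The Laurent series of a Gaussian shift sum -/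

/-- The Laurent series `∑ₙ cₙ e^{-γn²} wⁿ`, which turns `gaussShiftSum γ c` into a holomorphic
function on the punctured plane through the substitution `w = e^{2γx}`. -/
noncomputable def gaussLaurent (γ : ℂ) (c : ℤ → ℂ) (w : ℂ) : ℂ :=
  ∑' n : ℤ, c n * Complex.exp (-γ * (n : ℂ) ^ 2) * w ^ n

theorem gaussShiftSum_eq_cexp_mul_gaussLaurent (γ : ℂ) (c : ℤ → ℂ) (x : ℝ) :
    gaussShiftSum γ c x =
      Complex.exp (-γ * (x : ℂ) ^ 2) * gaussLaurent γ c (Complex.exp (2 * γ * x)) := by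
  rw [gaussShiftSum, gaussLaurent, ← tsum_mul_left]
  refine tsum_congr fun n => ?_
  have hexp : Complex.exp (-γ * ((x : ℂ) - n) ^ 2) = Complex.exp (-γ * (x : ℂ) ^ 2) *
      Complex.exp (-γ * (n : ℂ) ^ 2) * Complex.exp (2 * γ * x) ^ n := by
    rw [← Complex.exp_int_mul, ← Complex.exp_add, ← Complex.exp_add]
    ring_nf
  rw [hexp]
  ring

theorem norm_gaussShiftSum_eq (γ : ℂ) (c : ℤ → ℂ) (x : ℝ) :
    ‖gaussShiftSum γ c x‖ =
      Real.exp (-γ.re * x ^ 2) * ‖gaussLaurent γ c (Complex.exp (2 * γ * x))‖ := by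
  rw [gaussShiftSum_eq_cexp_mul_gaussLaurent, norm_mul, norm_cexp_neg_mul_sq]

theorem norm_cexp_two_mul_mul_ofReal (γ : ℂ) (x : ℝ) :
    ‖Complex.exp (2 * γ * x)‖ = Real.exp (2 * γ.re * x) := by
  simp [Complex.norm_exp]

section Growth

variable {γ : ℂ} {c : ℤ → ℂ} {s A : ℝ}

theorem norm_gaussLaurent_coeff_mul_zpow_le (hs : 0 ≤ s)
    (hc : ∀ n : ℤ, ‖c n‖ ≤ A * Real.exp (s * |(n : ℝ)|)) (σ : ℝ) (n : ℤ) :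
    ‖c n * Complex.exp (-γ * (n : ℂ) ^ 2)‖ * Real.exp (2 * γ.re * σ) ^ n ≤
      A * Real.exp (γ.re * σ ^ 2 + s * |σ|) *
        Real.exp (s * |(n : ℝ) - σ| - γ.re * ((n : ℝ) - σ) ^ 2) := by
  have hA : 0 ≤ A := (norm_nonneg (c 0)).trans (by simpa using hc 0)
  have habs : s * |(n : ℝ)| ≤ s * (|(n : ℝ) - σ| + |σ|) :=
    mul_le_mul_of_nonneg_left (by simpa using abs_add_le ((n : ℝ) - σ) σ) hs
  rw [norm_mul, ← Complex.ofReal_intCast, norm_cexp_neg_mul_sq, ← Real.rpow_intCast,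
    ← Real.exp_mul]
  calc ‖c n‖ * Real.exp (-γ.re * (n : ℝ) ^ 2) * Real.exp (2 * γ.re * σ * n)
      ≤ A * Real.exp (s * |(n : ℝ)|) * Real.exp (-γ.re * (n : ℝ) ^ 2) *
          Real.exp (2 * γ.re * σ * n) := by gcongr; exact hc n
    _ = A * Real.exp (s * |(n : ℝ)| + (-γ.re * (n : ℝ) ^ 2 + 2 * γ.re * σ * n)) := by
        rw [Real.exp_add, Real.exp_add]; ring
    _ ≤ A * Real.exp (γ.re * σ ^ 2 + s * |σ| +
          (s * |(n : ℝ) - σ| - γ.re * ((n : ℝ) - σ) ^ 2)) := by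
        gcongr A * Real.exp ?_
        linarith
    _ = _ := by rw [Real.exp_add, mul_assoc]

theorem exists_norm_gaussLaurent_le (hγ : 0 < γ.re) (hs : 0 ≤ s) :
    ∃ C, 0 < C ∧ ∀ (c : ℤ → ℂ) (A : ℝ), (∀ n : ℤ, ‖c n‖ ≤ A * Real.exp (s * |(n : ℝ)|)) →
      ∀ (σ : ℝ) (w : ℂ), ‖w‖ = Real.exp (2 * γ.re * σ) →
        ‖gaussLaurent γ c w‖ ≤ A * Real.exp (γ.re * σ ^ 2 + s * |σ|) * C := by
  obtain ⟨C, hC, h⟩ := exists_tsum_exp_mul_abs_sub_mul_sq_le hγ s one_pos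
    pairwise_one_le_abs_intCast_sub
  refine ⟨C, hC, fun c A hc σ w hw => ?_⟩
  have hA : 0 ≤ A := (norm_nonneg (c 0)).trans (by simpa using hc 0)
  calc ‖gaussLaurent γ c w‖
      ≤ ∑' n : ℤ, A * Real.exp (γ.re * σ ^ 2 + s * |σ|) *
          Real.exp (s * |(n : ℝ) - σ| - γ.re * ((n : ℝ) - σ) ^ 2) := by
        refine tsum_of_norm_bounded ((h σ).1.mul_left _).hasSum fun n => ?_
        rw [norm_mul, norm_zpow, hw]
        exact norm_gaussLaurent_coeff_mul_zpow_le hs hc σ n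
    _ ≤ A * Real.exp (γ.re * σ ^ 2 + s * |σ|) * C := by
        rw [tsum_mul_left]
        exact mul_le_mul_of_nonneg_left (h σ).2 (by positivity)

theorem summable_norm_gaussLaurent_coeff_mul_zpow (hγ : 0 < γ.re) (hs : 0 ≤ s)
    (hc : ∀ n : ℤ, ‖c n‖ ≤ A * Real.exp (s * |(n : ℝ)|)) {r : ℝ} (hr : 0 < r) :
    Summable fun n : ℤ => ‖c n * Complex.exp (-γ * (n : ℂ) ^ 2)‖ * r ^ n := by
  obtain ⟨C, -, h⟩ := exists_tsum_exp_mul_abs_sub_mul_sq_le hγ s one_pos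
    pairwise_one_le_abs_intCast_sub
  have hexp : Real.exp (2 * γ.re * (Real.log r / (2 * γ.re))) = r := by
    rw [mul_div_cancel₀ _ (by positivity), Real.exp_log hr]
  refine Summable.of_nonneg_of_le (fun n => by positivity) (fun n => ?_)
    ((h (Real.log r / (2 * γ.re))).1.mul_left
      (A * Real.exp (γ.re * (Real.log r / (2 * γ.re)) ^ 2 + s * |Real.log r / (2 * γ.re)|)))
  simpa only [hexp] using
    norm_gaussLaurent_coeff_mul_zpow_le (γ := γ) hs hc (Real.log r / (2 * γ.re)) n

theorem differentiableOn_gaussLaurent (hγ : 0 < γ.re) (hs : 0 ≤ s)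
    (hc : ∀ n : ℤ, ‖c n‖ ≤ A * Real.exp (s * |(n : ℝ)|)) :
    DifferentiableOn ℂ (gaussLaurent γ c) {0}ᶜ :=
  differentiableOn_tsum_zpow fun _ => summable_norm_gaussLaurent_coeff_mul_zpow hγ hs hc

theorem norm_coeff_zero_le_of_norm_gaussLaurent_le (hγ : 0 < γ.re) (hs : 0 ≤ s)
    (hc : ∀ n : ℤ, ‖c n‖ ≤ A * Real.exp (s * |(n : ℝ)|)) {B : ℝ}
    (hB : ∀ w : ℂ, ‖w‖ = 1 → ‖gaussLaurent γ c w‖ ≤ B) : ‖c 0‖ ≤ B := by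
  simpa using norm_coeff_zero_le_of_norm_tsum_zpow_le
    (by simpa using summable_norm_gaussLaurent_coeff_mul_zpow hγ hs hc one_pos) hB

end Growth

/-! ### Points of a dense set -/

/-- Every window of length `L - 1/2` contains at least `L + 1` points of `Λ`: the form in which a
lower Beurling density above `1` is used. The window is shorter than `L` so that consecutive
windows can be kept apart. -/
def HasDenseWindows (Λ : Set ℝ) (L : ℕ) : Prop :=
  ∀ x : ℝ, L + 1 ≤ (Λ ∩ Set.Icc x (x + (L - 1 / 2))).ncard

theorem exists_hasDenseWindows_of_one_lt_lowerBeurlingDensity {Λ : Set ℝ}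
    (hΛ : 1 < lowerBeurlingDensity Λ) : ∃ L : ℕ, 1 ≤ L ∧ HasDenseWindows Λ L := by
  rw [lowerBeurlingDensity, liminf_eq] at hΛ
  have hne : {b : ℝ | ∀ᶠ r : ℝ in atTop,
      b ≤ (⨅ x : ℝ, ((Λ ∩ Set.Icc x (x + r)).ncard : ℝ)) / r}.Nonempty := by
    by_contra! hempty
    rw [hempty, Real.sSup_empty] at hΛ
    linarith
  obtain ⟨b, hb, hb1⟩ := exists_lt_of_lt_csSup hne hΛ
  have hev : ∀ᶠ L : ℕ in atTop, 1 ≤ L ∧ (1 + b / 2) / (b - 1) ≤ L ∧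
      b ≤ (⨅ x : ℝ, ((Λ ∩ Set.Icc x (x + ((L : ℝ) - 1 / 2))).ncard : ℝ)) / ((L : ℝ) - 1 / 2) :=
    (eventually_ge_atTop 1).and <| (tendsto_natCast_atTop_atTop.eventually_ge_atTop _).and <|
      (tendsto_atTop_add_const_right _ (-(1 / 2) : ℝ) tendsto_natCast_atTop_atTop).eventually hb
  obtain ⟨L, hL, hLb, hinf⟩ := hev.exists
  have hL' : (1 : ℝ) ≤ L := by exact_mod_cast hL
  refine ⟨L, hL, fun x => ?_⟩
  rw [div_le_iff₀ (by linarith)] at hLb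
  rw [le_div_iff₀ (by linarith)] at hinf
  have hx := hinf.trans (ciInf_le ⟨0, by rintro _ ⟨y, rfl⟩; positivity⟩ x)
  exact_mod_cast (show (L : ℝ) + 1 ≤ _ by linarith).trans hx

namespace HasDenseWindows

variable {Λ : Set ℝ} {L : ℕ}

theorem preimage_add_const (hΛ : HasDenseWindows Λ L) (t : ℝ) :
    HasDenseWindows ((· + t) ⁻¹' Λ) L := fun x => by
  have himage : Λ ∩ Set.Icc (x + t) (x + t + (L - 1 / 2)) =
      (· + t) '' ((· + t) ⁻¹' Λ ∩ Set.Icc x (x + (L - 1 / 2))) := by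
    rw [Set.image_preimage_inter, Set.image_add_const_Icc, add_right_comm]
  simpa only [himage, Set.ncard_image_of_injective _ (add_left_injective t)] using hΛ (x + t)

theorem neg (hΛ : HasDenseWindows Λ L) : HasDenseWindows (Neg.neg ⁻¹' Λ) L := fun x => by
  have himage : Λ ∩ Set.Icc (-(x + (L - 1 / 2))) (-(x + (L - 1 / 2)) + (L - 1 / 2)) =
      Neg.neg '' (Neg.neg ⁻¹' Λ ∩ Set.Icc x (x + (L - 1 / 2))) := by
    rw [Set.image_preimage_inter, Set.image_neg_Icc]
    congr 2
    ring
  simpa only [himage, Set.ncard_image_of_injective _ neg_injective] using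
    hΛ (-(x + (L - 1 / 2)))

theorem exists_finset_subset_Icc (hΛ : HasDenseWindows Λ L) (x : ℝ) :
    ∃ S : Finset ℝ, ↑S ⊆ Λ ∧ S.card = L + 1 ∧ ∀ l ∈ S, l ∈ Set.Icc x (x + (L - 1 / 2)) := by
  obtain ⟨t, ht, hcard⟩ := Set.exists_subset_card_eq (hΛ x)
  lift t to Finset ℝ using Set.finite_of_ncard_ne_zero (by omega)
  rw [Set.ncard_coe_finset] at hcard
  exact ⟨t, fun l hl => (ht hl).1, hcard, fun l hl => (ht hl).2⟩

theorem exists_finset_pos (hΛ : HasDenseWindows Λ L) (J : ℕ) :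
    ∃ S : Finset ℝ, ↑S ⊆ Λ ∧ S.card = J * (L + 1) ∧
      (∀ l ∈ S, l ∈ Set.Icc (1 / 4 : ℝ) (J * L - 1 / 4)) ∧
      ∑ l ∈ S, l ≤ ((L : ℝ) + 1) * L * (J * (J + 1)) / 2 := by
  classical
  induction J with
  | zero => exact ⟨∅, by simp⟩
  | succ J ih =>
    obtain ⟨S, hSΛ, hScard, hSmem, hSsum⟩ := ih
    obtain ⟨A, hAΛ, hAcard, hAmem⟩ := hΛ.exists_finset_subset_Icc (J * L + 1 / 4)
    have hJL : (0 : ℝ) ≤ J * L := by positivity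
    have hA : ∀ l ∈ A, (J : ℝ) * L + 1 / 4 ≤ l ∧ l ≤ (J + 1) * L - 1 / 4 := fun l hl =>
      ⟨(hAmem l hl).1, (hAmem l hl).2.trans (by linarith)⟩
    have hdisj : Disjoint S A := Finset.disjoint_left.2 fun l hlS hlA => by
      linarith [(hSmem l hlS).2, (hA l hlA).1]
    have hAsum : ∑ l ∈ A, l ≤ ((L : ℝ) + 1) * ((J + 1) * L) := by
      simpa [hAcard] using Finset.sum_le_card_nsmul A (fun l => l) ((J + 1) * L)
        fun l hl => (hA l hl).2.trans (by linarith)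
    refine ⟨S ∪ A, by simp [hSΛ, hAΛ], ?_, fun l hl => ?_, ?_⟩
    · rw [Finset.card_union_of_disjoint hdisj, hScard, hAcard, add_one_mul]
    · push_cast
      rcases Finset.mem_union.1 hl with hlS | hlA
      · exact ⟨(hSmem l hlS).1, (hSmem l hlS).2.trans (by linarith [L.cast_nonneg (α := ℝ)])⟩
      · exact ⟨by linarith [(hA l hlA).1], (hA l hlA).2⟩
    · rw [Finset.sum_union hdisj]
      push_cast
      linarith

theorem exists_finset_symm (hΛ : HasDenseWindows Λ L) (J : ℕ) :
    ∃ S : Finset ℝ, ↑S ⊆ Λ ∧ S.card = 2 * (J * (L + 1)) ∧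
      (∀ l ∈ S, |l| ≤ (J : ℝ) * L - 1 / 4) ∧
      ∑ l ∈ S, max l 0 ≤ ((L : ℝ) + 1) * L * (J * (J + 1)) / 2 ∧
      ∑ l ∈ S, max (-l) 0 ≤ ((L : ℝ) + 1) * L * (J * (J + 1)) / 2 := by
  classical
  obtain ⟨S, hSΛ, hScard, hSmem, hSsum⟩ := hΛ.exists_finset_pos J
  obtain ⟨N, hNΛ, hNcard, hNmem, hNsum⟩ := hΛ.neg.exists_finset_pos J
  have hSpos : ∀ l ∈ S, 0 < l := fun l hl => by linarith [(hSmem l hl).1]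
  have hNpos : ∀ l ∈ N, 0 < l := fun l hl => by linarith [(hNmem l hl).1]
  have hinj : Set.InjOn Neg.neg (N : Set ℝ) := neg_injective.injOn
  have hdisj : Disjoint S (N.image Neg.neg) := Finset.disjoint_left.2 fun l hlS hlN => by
    obtain ⟨l', hl', rfl⟩ := Finset.mem_image.1 hlN
    linarith [hSpos _ hlS, hNpos l' hl']
  refine ⟨S ∪ N.image Neg.neg, ?_, ?_, ?_, ?_, ?_⟩
  · rw [Finset.coe_union, Finset.coe_image, Set.union_subset_iff, Set.image_subset_iff]
    exact ⟨hSΛ, hNΛ⟩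
  · rw [Finset.card_union_of_disjoint hdisj, Finset.card_image_of_injOn hinj, hScard, hNcard,
      two_mul]
  · simp only [Finset.mem_union, Finset.mem_image]
    rintro l (hl | ⟨l', hl', rfl⟩)
    · rw [abs_of_pos (hSpos l hl)]
      exact (hSmem l hl).2
    · rw [abs_neg, abs_of_pos (hNpos l' hl')]
      exact (hNmem l' hl').2
  · rw [Finset.sum_union hdisj, Finset.sum_image hinj,
      Finset.sum_congr rfl fun l hl => max_eq_left (hSpos l hl).le,
      Finset.sum_eq_zero fun l hl => max_eq_right (neg_nonpos.2 (hNpos l hl).le), add_zero]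
    exact hSsum
  · rw [Finset.sum_union hdisj, Finset.sum_image hinj,
      Finset.sum_eq_zero fun l hl => max_eq_right (neg_nonpos.2 (hSpos l hl).le), zero_add]
    simp only [neg_neg]
    rw [Finset.sum_congr rfl fun l hl => max_eq_left (hNpos l hl).le]
    exact hNsum

end HasDenseWindows

/-! ### A dominant coefficient is seen by a nearby sample -/

theorem exp_mul_abs_sub_le_abs_exp_sub {t x y : ℝ} (hx : t ≤ x) (hy : t ≤ y) :
    Real.exp t * |x - y| ≤ |Real.exp x - Real.exp y| := by
  wlog hxy : y ≤ x generalizing x y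
  · simpa only [abs_sub_comm] using this hy hx (le_of_not_ge hxy)
  rw [abs_of_nonneg (sub_nonneg.2 hxy), abs_of_nonneg (sub_nonneg.2 (Real.exp_le_exp.2 hxy))]
  calc Real.exp t * (x - y) ≤ Real.exp y * (Real.exp (x - y) - 1) := by
        exact mul_le_mul (Real.exp_le_exp.2 hy) (by linarith [Real.add_one_le_exp (x - y)])
          (sub_nonneg.2 hxy) (Real.exp_pos y).le
    _ = Real.exp x - Real.exp y := by rw [mul_sub, ← Real.exp_add, add_sub_cancel, mul_one]

section Nodes

variable {γ : ℂ} {T ε E : ℝ} {S : Finset ℝ}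

theorem mul_exp_le_norm_cexp_two_mul_sub (hγ : 0 < γ.re) (hST : ∀ l ∈ S, |l| ≤ T)
    (hsep : ∀ x ∈ S, ∀ y ∈ S, x ≠ y → ε ≤ |x - y|) :
    ∀ x ∈ S, ∀ y ∈ S, x ≠ y → Real.exp (-(2 * γ.re * T)) * (2 * γ.re * ε) ≤
      ‖Complex.exp (2 * γ * x) - Complex.exp (2 * γ * y)‖ := fun x hx y hy hxy => by
  have hbelow (l : ℝ) (hl : l ∈ S) : -(2 * γ.re * T) ≤ 2 * γ.re * l := by
    rw [← mul_neg]
    exact mul_le_mul_of_nonneg_left (neg_le_of_abs_le (hST l hl)) (by positivity)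
  calc Real.exp (-(2 * γ.re * T)) * (2 * γ.re * ε)
      ≤ Real.exp (-(2 * γ.re * T)) * |2 * γ.re * x - 2 * γ.re * y| := by
        rw [← mul_sub, abs_mul, abs_of_pos (by positivity : 0 < 2 * γ.re)]
        gcongr
        exact hsep x hx y hy hxy
    _ ≤ |Real.exp (2 * γ.re * x) - Real.exp (2 * γ.re * y)| :=
        exp_mul_abs_sub_le_abs_exp_sub (hbelow x hx) (hbelow y hy)
    _ ≤ ‖Complex.exp (2 * γ * x) - Complex.exp (2 * γ * y)‖ := by
        simpa only [norm_cexp_two_mul_mul_ofReal] using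
          abs_norm_sub_norm_le (Complex.exp (2 * γ * x)) (Complex.exp (2 * γ * y))

theorem prod_max_exp_one_le {a : ℝ} (ha : 0 ≤ a) {u : ℝ → ℝ} (hE : ∑ l ∈ S, max (u l) 0 ≤ E) :
    ∏ l ∈ S, max (Real.exp (a * u l)) 1 ≤ Real.exp (a * E) := by
  have hfactor (l : ℝ) : max (Real.exp (a * u l)) 1 = Real.exp (a * max (u l) 0) := by
    rw [mul_max_of_nonneg _ _ ha, mul_zero, Real.exp_monotone.map_max, Real.exp_zero]
  rw [Finset.prod_congr rfl fun l _ => hfactor l, ← Real.exp_sum, ← Finset.mul_sum]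
  gcongr

end Nodes

theorem exists_norm_coeff_zero_le_of_gaussLaurent_le {γ : ℂ} (hγ : 0 < γ.re) {s T ε η : ℝ}
    (hs : 0 ≤ s) (hT : 0 < T) (hε : 0 < ε) (hη : 0 < η) (E : ℝ) {p : ℕ} (hp : 0 < p) :
    ∃ K, 0 < K ∧ ∀ S : Finset ℝ, S.card = 2 * p → (∀ x ∈ S, ∀ y ∈ S, x ≠ y → ε ≤ |x - y|) →
      (∀ l ∈ S, |l| ≤ T - η) → ∑ l ∈ S, max l 0 ≤ E → ∑ l ∈ S, max (-l) 0 ≤ E →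
      ∀ (c : ℤ → ℂ) (A M δ : ℝ), (∀ n : ℤ, ‖c n‖ ≤ A * Real.exp (s * |(n : ℝ)|)) →
        (∀ σ w, |σ| = T → ‖w‖ = Real.exp (2 * γ.re * σ) → ‖gaussLaurent γ c w‖ ≤ M) →
        (∀ l ∈ S, ‖gaussLaurent γ c (Complex.exp (2 * γ * l))‖ ≤ δ) →
        ‖c 0‖ ≤ (4 / ((1 - Real.exp (-(2 * γ.re * η))) ^ 2 * Real.exp (2 * γ.re * T))) ^ p *
          Real.exp (2 * γ.re * E) * M + K * δ := by
  have ha : 0 < 2 * γ.re := by positivity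
  set R := Real.exp (2 * γ.re * T) with hR
  set κ := 1 - Real.exp (-(2 * γ.re * η)) with hκ
  set G := Real.exp (2 * γ.re * E)
  set ρ := Real.exp (-(2 * γ.re * T)) * (2 * γ.re * ε)
  have hκ₀ : 0 < κ := sub_pos.2 (Real.exp_lt_one_iff.2 (neg_lt_zero.2 (by positivity)))
  have hR₁ : 1 < R := Real.one_lt_exp_iff.2 (by positivity)
  have hshift (σ : ℝ) : (1 - κ) * Real.exp (2 * γ.re * σ) = Real.exp (2 * γ.re * (σ - η)) := by
    rw [hκ, sub_sub_cancel, ← Real.exp_add]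
    ring_nf
  refine ⟨((4 / (κ ^ 2 * R)) ^ p * G + 1) * ((2 * p : ℕ) * (1 + 2 * R / ρ) ^ (2 * p)),
    by positivity, fun S hcard hsep hST hE hE' c A M δ hc hM hδ => ?_⟩
  refine norm_coeff_zero_le_of_norm_gaussLaurent_le hγ hs hc fun w hw => ?_
  have hT' (l : ℝ) (hl : l ∈ S) : |l| ≤ T := (hST l hl).trans (by linarith)
  rw [← hcard]
  refine norm_le_of_small_values_in_annulus (v := fun l : ℝ => Complex.exp (2 * γ * l)) hκ₀ hR₁
    hcard (by positivity) (mul_exp_le_norm_cexp_two_mul_sub hγ hT' hsep) (fun l hl => ?_)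
    (fun l hl => ?_) ?_ ?_ (differentiableOn_gaussLaurent hγ hs hc) hδ
    (fun z hz => hM (-T) z (by rw [abs_neg, abs_of_pos hT]) (by rw [hz, hR, mul_neg, Real.exp_neg]))
    (fun z hz => hM T z (abs_of_pos hT) hz) hw
  · rw [norm_cexp_two_mul_mul_ofReal, hshift, hR, ← Real.exp_neg, ← mul_neg]
    gcongr
    linarith [neg_le_of_abs_le (hST l hl)]
  · rw [norm_cexp_two_mul_mul_ofReal, hshift]
    gcongr
    linarith [le_of_abs_le (hST l hl)]
  · simpa only [norm_cexp_two_mul_mul_ofReal] using prod_max_exp_one_le ha.le hE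
  · simpa only [norm_cexp_two_mul_mul_ofReal, ← Real.exp_neg, ← mul_neg] using
      prod_max_exp_one_le ha.le hE'

theorem tendsto_exp_neg_mul_sq_add_mul {b : ℝ} (hb : 0 < b) (D : ℝ) :
    Tendsto (fun x : ℝ => Real.exp (-b * x ^ 2 + D * x)) atTop (nhds 0) := by
  have hlin : Tendsto (fun x : ℝ => -b * x + D) atTop atBot :=
    tendsto_atBot_add_const_right _ _ (tendsto_id.const_mul_atTop_of_neg (neg_lt_zero.2 hb))
  refine (Real.tendsto_exp_atBot.comp (tendsto_id.atTop_mul_atBot₀ hlin)).congr fun x => ?_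
  simp only [Function.comp_apply, id]
  ring_nf

/-- With `J` windows of length `L` on each side, the `2J(L+1)` zeros gain `e^{-2aL(L+1)J²}`, against
`e^{aL(L+1)J²}` lost to their positions and `e^{aL²J²}` to the growth of the Laurent series: the
net gain is `e^{-aLJ²}`, up to factors exponential in `J`. -/
theorem exists_pow_mul_exp_le {a κ : ℝ} (ha : 0 < a) (hκ : 0 < κ) (s C : ℝ) {L : ℕ}
    (hL : 1 ≤ L) {δ : ℝ} (hδ : 0 < δ) :
    ∃ J : ℕ, 1 ≤ J ∧ (4 / (κ ^ 2 * Real.exp (2 * a * (J * L)))) ^ (J * (L + 1)) *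
      Real.exp (2 * a * (((L : ℝ) + 1) * L * (J * (J + 1)) / 2)) *
        (Real.exp (a * (J * L) ^ 2 + s * (J * L)) * C) ≤ δ := by
  have hq : Real.exp (Real.log (4 / κ ^ 2)) = 4 / κ ^ 2 := Real.exp_log (by positivity)
  set q := Real.log (4 / κ ^ 2)
  have hexp (J : ℕ) : (4 / (κ ^ 2 * Real.exp (2 * a * (J * L)))) ^ (J * (L + 1)) *
      Real.exp (2 * a * (((L : ℝ) + 1) * L * (J * (J + 1)) / 2)) *
        (Real.exp (a * (J * L) ^ 2 + s * (J * L)) * C) =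
      Real.exp (-(a * L) * (J : ℝ) ^ 2 + ((L + 1) * q + a * (L + 1) * L + s * L) * J) * C := by
    rw [← div_div, ← hq, ← Real.exp_sub, ← Real.exp_nat_mul, ← mul_assoc, ← Real.exp_add,
      ← Real.exp_add]
    push_cast
    ring_nf
  have hlim := ((tendsto_exp_neg_mul_sq_add_mul (by positivity : 0 < a * L)
    ((L + 1) * q + a * (L + 1) * L + s * L)).comp tendsto_natCast_atTop_atTop).mul_const C
  rw [zero_mul] at hlim
  obtain ⟨J, hJ, hJδ⟩ := ((eventually_ge_atTop 1).and (hlim.eventually_le_const hδ)).exists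
  exact ⟨J, hJ, (hexp J).trans_le hJδ⟩

theorem exists_norm_coeff_zero_le_mul_norm_gaussShiftSum {γ : ℂ} (hγ : 0 < γ.re) {s ε : ℝ}
    (hs : 0 ≤ s) (hε : 0 < ε) {L : ℕ} (hL : 1 ≤ L) :
    ∃ N C, 0 < C ∧ ∀ Λ : Set ℝ, (∀ x ∈ Λ, ∀ y ∈ Λ, x ≠ y → ε ≤ |x - y|) → HasDenseWindows Λ L →
      ∀ c : ℤ → ℂ, (∀ n : ℤ, ‖c n‖ ≤ ‖c 0‖ * Real.exp (s * |(n : ℝ)|)) →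
        ∃ l ∈ Λ, |l| ≤ N ∧ ‖c 0‖ ≤ C * ‖gaussShiftSum γ c l‖ := by
  have hκ : 0 < 1 - Real.exp (-(2 * γ.re * (1 / 4))) :=
    sub_pos.2 (Real.exp_lt_one_iff.2 (by linarith))
  obtain ⟨C, -, hgrowth⟩ := exists_norm_gaussLaurent_le hγ hs
  obtain ⟨J, hJ, hsmall⟩ := exists_pow_mul_exp_le hγ hκ s C hL one_half_pos
  have hT : (0 : ℝ) < J * L := by positivity
  set E := ((L : ℝ) + 1) * L * (J * (J + 1)) / 2
  set T : ℝ := J * L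
  obtain ⟨K, hK, hcoeff⟩ := exists_norm_coeff_zero_le_of_gaussLaurent_le hγ hs hT hε
    (by norm_num : (0 : ℝ) < 1 / 4) E (by positivity : 0 < J * (L + 1))
  refine ⟨T, 2 * K * Real.exp (γ.re * T ^ 2), by positivity, fun Λ hsep hΛ c hc => ?_⟩
  obtain ⟨S, hSΛ, hcard, hST, hE, hE'⟩ := hΛ.exists_finset_symm J
  have hSne : S.Nonempty := Finset.card_pos.1 (by rw [hcard]; positivity)
  obtain ⟨l, hlS, hmax⟩ := S.exists_max_image
    (fun l : ℝ => ‖gaussLaurent γ c (Complex.exp (2 * γ * l))‖) hSne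
  have hlT : |l| ≤ T := (hST l hlS).trans (by linarith)
  have hzero := hcoeff S hcard (fun x hx y hy => hsep x (hSΛ hx) y (hSΛ hy)) hST hE hE' c _
    (‖c 0‖ * Real.exp (γ.re * T ^ 2 + s * T) * C) _ hc
    (fun σ w hσ hw => by simpa only [← sq_abs σ, hσ] using hgrowth c _ hc σ w hw) hmax
  have hhalf : ‖c 0‖ ≤ ‖c 0‖ * (1 / 2) +
      K * ‖gaussLaurent γ c (Complex.exp (2 * γ * l))‖ := by
    linarith [mul_le_mul_of_nonneg_left hsmall (norm_nonneg (c 0))]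
  refine ⟨l, hSΛ hlS, hlT, ?_⟩
  have hnode : ‖gaussLaurent γ c (Complex.exp (2 * γ * l))‖ ≤
      Real.exp (γ.re * T ^ 2) * ‖gaussShiftSum γ c l‖ := by
    rw [norm_gaussShiftSum_eq, ← mul_assoc, ← Real.exp_add]
    refine le_mul_of_one_le_left (norm_nonneg _) (Real.one_le_exp ?_)
    nlinarith [sq_le_sq.2 (hlT.trans (le_abs_self T))]
  nlinarith [mul_le_mul_of_nonneg_left hnode hK.le]

theorem exists_dominating_index {u : ℤ → ℝ} {s : ℝ} (hs : 0 ≤ s) (hu : ∀ m, 0 ≤ u m)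
    (hlim : Tendsto u cofinite (nhds 0)) (n : ℤ) :
    ∃ k : ℤ, (∀ m : ℤ, u m ≤ u k * Real.exp (s * |(m : ℝ) - k|)) ∧
      u n ≤ u k * Real.exp (-s * |(n : ℝ) - k|) := by
  obtain ⟨k, hk⟩ : ∃ k : ℤ, ∀ m : ℤ, u m * Real.exp (-s * |(n : ℝ) - m|) ≤
      u k * Real.exp (-s * |(n : ℝ) - k|) := by
    by_cases hzero : ∀ m, u m = 0
    · exact ⟨0, fun m => by simp [hzero]⟩
    obtain ⟨m₀, hm₀⟩ := not_forall.1 hzero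
    have hpos : 0 < u m₀ * Real.exp (-s * |(n : ℝ) - m₀|) :=
      mul_pos ((hu m₀).lt_of_ne' hm₀) (Real.exp_pos _)
    refine (continuous_of_discreteTopology (f := fun m : ℤ =>
      u m * Real.exp (-s * |(n : ℝ) - m|))).exists_forall_ge' m₀ ?_
    rw [cocompact_eq_cofinite]
    filter_upwards [hlim.eventually_lt_const hpos] with m hm
    refine (mul_le_of_le_one_right (hu m) (Real.exp_le_one_iff.2 ?_)).trans hm.le
    exact mul_nonpos_of_nonpos_of_nonneg (neg_nonpos.2 hs) (abs_nonneg _)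
  refine ⟨k, fun m => ?_, by simpa using hk n⟩
  have htri : s * |(n : ℝ) - m| ≤ s * (|(n : ℝ) - k| + |(m : ℝ) - k|) := by
    rw [abs_sub_comm (m : ℝ)]
    exact mul_le_mul_of_nonneg_left (abs_sub_le _ _ _) hs
  calc u m = u m * Real.exp (-s * |(n : ℝ) - m|) * Real.exp (s * |(n : ℝ) - m|) := by
        rw [mul_assoc, ← Real.exp_add, neg_mul, neg_add_cancel, Real.exp_zero, mul_one]
    _ ≤ u k * Real.exp (-s * |(n : ℝ) - k|) * Real.exp (s * |(n : ℝ) - m|) := by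
        gcongr ?_ * _
        exact hk m
    _ = u k * Real.exp (-s * |(n : ℝ) - k| + s * |(n : ℝ) - m|) := by rw [mul_assoc, Real.exp_add]
    _ ≤ u k * Real.exp (s * |(m : ℝ) - k|) := by
        refine mul_le_mul_of_nonneg_left (Real.exp_le_exp.2 ?_) (hu k)
        linarith

theorem gaussShiftSum_comp_add_intCast (γ : ℂ) (c : ℤ → ℂ) (k : ℤ) (x : ℝ) :
    gaussShiftSum γ (fun n => c (n + k)) x = gaussShiftSum γ c (x + k) := by
  rw [gaussShiftSum, gaussShiftSum, ← (Equiv.addRight k).tsum_eq fun n : ℤ =>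
    c n * Complex.exp (-γ * (((x + k : ℝ) : ℂ) - (n : ℂ)) ^ 2)]
  refine tsum_congr fun n => ?_
  simp only [Equiv.coe_addRight]
  push_cast
  ring_nf

theorem exists_norm_coeff_le_mul_norm_gaussShiftSum {γ : ℂ} (hγ : 0 < γ.re) {s ε : ℝ}
    (hs : 0 ≤ s) (hε : 0 < ε) {L : ℕ} (hL : 1 ≤ L) {Λ : Set ℝ}
    (hsep : ∀ x ∈ Λ, ∀ y ∈ Λ, x ≠ y → ε ≤ |x - y|) (hΛ : HasDenseWindows Λ L) :
    ∃ C, 0 < C ∧ ∀ c : ℤ → ℂ, Tendsto c cofinite (nhds 0) → ∀ n : ℤ, ∃ l ∈ Λ,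
      ‖c n‖ ≤ C * ‖gaussShiftSum γ c l‖ * Real.exp (-s * |(n : ℝ) - l|) := by
  obtain ⟨N, C, hC, hzero⟩ := exists_norm_coeff_zero_le_mul_norm_gaussShiftSum hγ hs hε hL
  refine ⟨C * Real.exp (s * N), by positivity, fun c hc n => ?_⟩
  obtain ⟨k, hk, hkn⟩ := exists_dominating_index hs (fun m => norm_nonneg (c m))
    (tendsto_zero_iff_norm_tendsto_zero.1 hc) n
  obtain ⟨l, hl, hlN, hck⟩ := hzero ((· + (k : ℝ)) ⁻¹' Λ)
    (fun x hx y hy hxy => by simpa using hsep _ hx _ hy (by simpa using hxy))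
    (hΛ.preimage_add_const k) (fun m => c (m + k)) fun m => by simpa using hk (m + k)
  rw [zero_add, gaussShiftSum_comp_add_intCast] at hck
  have htri : s * |(n : ℝ) - (l + k)| ≤ s * (|(n : ℝ) - k| + N) := by
    rw [← sub_sub, sub_right_comm]
    exact mul_le_mul_of_nonneg_left ((abs_sub _ _).trans (by gcongr)) hs
  refine ⟨l + k, hl, ?_⟩
  calc ‖c n‖ ≤ ‖c k‖ * Real.exp (-s * |(n : ℝ) - k|) := hkn
    _ ≤ C * ‖gaussShiftSum γ c (l + k)‖ * Real.exp (s * N + -s * |(n : ℝ) - (l + k)|) := by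
        gcongr
        linarith
    _ = C * Real.exp (s * N) * ‖gaussShiftSum γ c (l + k)‖ *
          Real.exp (-s * |(n : ℝ) - (l + k)|) := by
        rw [Real.exp_add]
        ring

/-! ### Sampling bounds -/

theorem norm_sq_gaussShiftSum_le {γ : ℂ} (hγ : 0 ≤ γ.re) {c : ℤ → ℂ} {x C : ℝ}
    (hsum : Summable fun n : ℤ => Real.exp (-γ.re * (x - n) ^ 2))
    (hC : ∑' n : ℤ, Real.exp (-γ.re * (x - n) ^ 2) ≤ C) (hc : Summable fun n => ‖c n‖ ^ 2) :
    ‖gaussShiftSum γ c x‖ ^ 2 ≤ C * ∑' n : ℤ, ‖c n‖ ^ 2 * Real.exp (-γ.re * (x - n) ^ 2) := by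
  have hterm (n : ℤ) : ‖c n * Complex.exp (-γ * ((x : ℂ) - n) ^ 2)‖ =
      ‖c n‖ * Real.exp (-γ.re * (x - n) ^ 2) := by
    rw [norm_mul, ← Complex.ofReal_intCast, ← Complex.ofReal_sub, norm_cexp_neg_mul_sq]
  have hbdd : Summable fun n : ℤ => ‖c n‖ ^ 2 * Real.exp (-γ.re * (x - n) ^ 2) :=
    hc.of_nonneg_of_le (fun n => by positivity) fun n =>
      mul_le_of_le_one_right (by positivity) (Real.exp_le_one_iff.2
        (mul_nonpos_of_nonpos_of_nonneg (neg_nonpos.2 hγ) (sq_nonneg _)))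
  obtain ⟨hsummable, hcauchy⟩ := sq_tsum_mul_le (fun n => norm_nonneg (c n))
    (fun n : ℤ => (Real.exp_pos (-γ.re * (x - n) ^ 2)).le) hsum hbdd
  calc ‖gaussShiftSum γ c x‖ ^ 2
      ≤ (∑' n : ℤ, ‖c n‖ * Real.exp (-γ.re * (x - n) ^ 2)) ^ 2 := by
        gcongr
        exact tsum_of_norm_bounded hsummable.hasSum fun n => (hterm n).le
    _ ≤ _ := hcauchy.trans (by gcongr)

theorem exists_tsum_norm_sq_gaussShiftSum_le {γ : ℂ} (hγ : 0 < γ.re) {ι : Type*} {x : ι → ℝ}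
    {ε : ℝ} (hε : 0 < ε) (hx : Pairwise fun i j => ε ≤ |x i - x j|) :
    ∃ B, 0 < B ∧ ∀ c : ℤ → ℂ, Summable (fun n => ‖c n‖ ^ 2) →
      Summable (fun i => ‖gaussShiftSum γ c (x i)‖ ^ 2) ∧
        ∑' i, ‖gaussShiftSum γ c (x i)‖ ^ 2 ≤ B * ∑' n, ‖c n‖ ^ 2 := by
  obtain ⟨C, hC, hsumZ⟩ := exists_tsum_exp_mul_abs_sub_mul_sq_le hγ 0 one_pos
    pairwise_one_le_abs_intCast_sub
  obtain ⟨D, hD, hsumx⟩ := exists_tsum_exp_mul_abs_sub_mul_sq_le hγ 0 hε hx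
  refine ⟨C * D, by positivity, fun c hc => ?_⟩
  simp only [zero_mul, zero_sub, ← neg_mul] at hsumZ hsumx
  rw [mul_assoc]
  refine summable_and_tsum_le_of_le_tsum_mul (fun n => by positivity) hc
    (fun n i => (Real.exp_pos (-γ.re * (x i - n) ^ 2)).le) (fun n => (hsumx n).1)
    (fun n => (hsumx n).2) hC.le (fun i => by positivity) fun i => ?_
  refine norm_sq_gaussShiftSum_le hγ.le ?_ ?_ hc
  · simpa only [sub_sq_comm (x i)] using (hsumZ (x i)).1
  · simpa only [sub_sq_comm (x i)] using (hsumZ (x i)).2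

theorem exists_tsum_norm_sq_coeff_le {γ : ℂ} {Λ : Set ℝ} {s C : ℝ} (hs : 0 < s) (hC : 0 < C) :
    ∃ B, 0 < B ∧ ∀ c : ℤ → ℂ,
      (∀ n : ℤ, ∃ l ∈ Λ, ‖c n‖ ≤ C * ‖gaussShiftSum γ c l‖ * Real.exp (-s * |(n : ℝ) - l|)) →
      Summable (fun l : Λ => ‖gaussShiftSum γ c l‖ ^ 2) →
        ∑' n, ‖c n‖ ^ 2 ≤ B * ∑' l : Λ, ‖gaussShiftSum γ c l‖ ^ 2 := by
  obtain ⟨D, hD, hsum⟩ := exists_tsum_exp_neg_mul_abs_sub_le (by positivity : 0 < 2 * s) one_pos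
    pairwise_one_le_abs_intCast_sub
  refine ⟨C ^ 2 * D, by positivity, fun c hc hf => ?_⟩
  rw [mul_assoc]
  refine (summable_and_tsum_le_of_le_tsum_mul (fun l => by positivity) hf
    (fun (l : Λ) (n : ℤ) => (Real.exp_pos (-(2 * s) * |(n : ℝ) - l|)).le) (fun l => (hsum l).1)
    (fun l => (hsum l).2) (sq_nonneg C) (fun n => by positivity) fun n => ?_).2
  obtain ⟨l, hl, hle⟩ := hc n
  have hsummable : Summable fun l : Λ =>
      ‖gaussShiftSum γ c l‖ ^ 2 * Real.exp (-(2 * s) * |(n : ℝ) - l|) :=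
    hf.of_nonneg_of_le (fun l => by positivity) fun l =>
      mul_le_of_le_one_right (by positivity) (Real.exp_le_one_iff.2
        (mul_nonpos_of_nonpos_of_nonneg (by linarith) (abs_nonneg _)))
  calc ‖c n‖ ^ 2
      ≤ (C * ‖gaussShiftSum γ c l‖ * Real.exp (-s * |(n : ℝ) - l|)) ^ 2 := by gcongr
    _ = C ^ 2 * (‖gaussShiftSum γ c l‖ ^ 2 * Real.exp (-(2 * s) * |(n : ℝ) - l|)) := by
        rw [mul_pow, mul_pow, ← Real.exp_nat_mul]
        ring_nf
    _ ≤ _ := by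
        gcongr
        exact hsummable.le_tsum (⟨l, hl⟩ : Λ) fun l _ => by positivity

theorem statement0_general (γ : ℂ) (hγ : 0 < γ.re) (Λ : Set ℝ) (hsep : IsSeparatedSet Λ)
    (hdens : 1 < lowerBeurlingDensity Λ) : IsSamplingV2 γ Λ := by
  obtain ⟨ε, hε, hsep⟩ := hsep
  obtain ⟨L, hL, hΛ⟩ := exists_hasDenseWindows_of_one_lt_lowerBeurlingDensity hdens
  obtain ⟨B, hB, hupper⟩ := exists_tsum_norm_sq_gaussShiftSum_le hγ hε
    (x := ((↑) : Λ → ℝ)) fun x y hxy => hsep x x.2 y y.2 (Subtype.coe_injective.ne hxy)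
  obtain ⟨C, hC, hlocal⟩ :=
    exists_norm_coeff_le_mul_norm_gaussShiftSum hγ zero_le_one hε hL hsep hΛ
  obtain ⟨D, hD, hlower⟩ := exists_tsum_norm_sq_coeff_le (γ := γ) (Λ := Λ) one_pos hC
  refine ⟨D⁻¹, by positivity, B, hB, fun c hc => ⟨?_, (hupper c hc).2⟩⟩
  have hc₀ : Tendsto c cofinite (nhds 0) :=
    tendsto_zero_iff_norm_tendsto_zero.2 (by simpa using hc.tendsto_cofinite_zero.sqrt)
  rw [inv_mul_le_iff₀ hD]
  exact hlower c (hlocal c hc₀) (hupper c hc).1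

/-- every separated `Λ ⊂ ℝ` with `D⁻(Λ) > 1` is sampling for `V²_a`. -/
theorem statement0 (a : ℝ) (ha : 0 < a) (Λ : Set ℝ)
    (hsep : IsSeparatedSet Λ) (hdens : 1 < lowerBeurlingDensity Λ) :
    IsSamplingV2 (a : ℂ) Λ :=
  statement0_general a (by simpa) Λ hsep hdens
end

section
/- Let a > 0. Every separated sequence Λ ⊂ ℝ with lower Beurling density D⁻(Λ) > 1 contains a subsequence which is a complete interpolating sequence for the Gaussian shift-invariant space V²_a. -/
open Filter MeasureTheory

/-!
Since `Λ` has lower density above one, the leftmost `L` points of `Λ` in a block of `L` consecutive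
reference integers drift, in total, to the left of them, and the rightmost `L` points to the right,
once `L` is large. Choosing left or right greedily from block to block gives an increasing sequence
`λₖ ∈ Λ` for which the partial sums of `λₖ - k` are bounded.

Sampling at this sequence is the matrix `A = (exp (-c (λₖ - n)²))` acting on coefficients. A finite
section of `A` is a Vandermonde matrix in the nodes `exp (2cλₖ)` up to diagonal factors, so Lagrange
polynomials give its inverse, whose `(n, m)` entry is at most `exp (Re c * E)` up to a constant for
an explicit exponent `E`. Bounded discrepancy is exactly what makes the quadratic terms of `E`
cancel, and leaves `E ≤ const - |n - m|` uniformly in the section. A limit point of these inverses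
is a two-sided inverse of `A` with exponential decay. By the Schur test `A` and this inverse are
bounded on `ℓ²`, which is complete interpolation.
-/

section Selection

open Set

/-- Every interval of length `r ≥ R` contains at least `b * r` points of `Λ`: a lower density bound
at finite scale. -/
def HasCountingLowerBound (Λ : Set ℝ) (b R : ℝ) : Prop :=
  ∀ r, R ≤ r → ∀ x : ℝ, b * r ≤ ((Λ ∩ Icc x (x + r)).ncard : ℝ)

theorem exists_hasCountingLowerBound_of_lt_lowerBeurlingDensity {Λ : Set ℝ} {δ : ℝ} (hδ : 0 ≤ δ)
    (hΛ : δ < lowerBeurlingDensity Λ) : ∃ b > δ, ∃ R > 0, HasCountingLowerBound Λ b R := by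
  rw [lowerBeurlingDensity, liminf_eq] at hΛ
  have hne : {b : ℝ | ∀ᶠ r : ℝ in atTop,
      b ≤ (⨅ x : ℝ, ((Λ ∩ Icc x (x + r)).ncard : ℝ)) / r}.Nonempty := by
    by_contra h
    rw [not_nonempty_iff_eq_empty.1 h, Real.sSup_empty] at hΛ
    exact hΛ.not_ge hδ
  obtain ⟨b, hb, hδb⟩ := exists_lt_of_lt_csSup hne hΛ
  obtain ⟨R, hR⟩ := eventually_atTop.1 hb
  refine ⟨b, hδb, max R 1, by positivity, fun r hr x => ?_⟩
  have hr₀ : 0 < r := zero_lt_one.trans_le ((le_max_right _ _).trans hr)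
  refine ((le_div_iff₀ hr₀).1 (hR r ((le_max_left _ _).trans hr))).trans (ciInf_le ⟨0, ?_⟩ x)
  rintro _ ⟨y, rfl⟩
  positivity

theorem HasCountingLowerBound.neg {Λ : Set ℝ} {b R : ℝ} (hΛ : HasCountingLowerBound Λ b R) :
    HasCountingLowerBound (-Λ) b R := by
  intro r hr x
  have hreflect : -Λ ∩ Icc x (x + r) = -(Λ ∩ Icc (-(x + r)) (-(x + r) + r)) := by
    rw [inter_neg, neg_Icc]
    ring_nf
  rw [hreflect, ← image_neg_eq_neg, ncard_image_of_injective _ neg_injective]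
  exact hΛ r hr _

theorem orderEmbOfFin_le_of_lt_card_filter {α : Type*} [LinearOrder α] {s : Finset α} {n : ℕ}
    (hs : s.card = n) {i : Fin n} {t : α} (hi : (i : ℕ) < (s.filter (· ≤ t)).card) :
    s.orderEmbOfFin hs i ≤ t := by
  by_contra! hlt
  have hsub : s.filter (· ≤ t) ⊆ (Finset.Iio i).image (s.orderEmbOfFin hs) := by
    intro y hy
    obtain ⟨hys, hyt⟩ := Finset.mem_filter.1 hy
    obtain ⟨j, rfl⟩ : y ∈ range (s.orderEmbOfFin hs) := by
      rwa [Finset.range_orderEmbOfFin, Finset.mem_coe]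
    exact Finset.mem_image_of_mem _
      (Finset.mem_Iio.2 ((s.orderEmbOfFin hs).lt_iff_lt.1 (hyt.trans_lt hlt)))
  have hcard := (Finset.card_le_card hsub).trans Finset.card_image_le
  rw [Fin.card_Iio] at hcard
  exact hi.not_ge hcard

/-- `f` lists, in increasing order, `L` points of `Λ` lying in the block `[x, x + L - 1]`, whose
reference points are `x, x + 1, …, x + L - 1`. -/
structure IsBlock (Λ : Set ℝ) {L : ℕ} (x : ℝ) (f : Fin L → ℝ) : Prop where
  strictMono : StrictMono f
  mem : ∀ i, f i ∈ Λ
  mem_Icc : ∀ i, f i ∈ Icc x (x + (L - 1))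

/-- The total displacement of the points `f i` from the reference points `x + i`. -/
def blockDrift {L : ℕ} (x : ℝ) (f : Fin L → ℝ) : ℝ :=
  ∑ i, (f i - (x + i))

namespace IsBlock

variable {Λ : Set ℝ} {L : ℕ} {x : ℝ} {f : Fin L → ℝ}

theorem abs_sub_le (hf : IsBlock Λ x f) (i : Fin L) : |f i - (x + i)| ≤ L := by
  obtain ⟨hxf, hfx⟩ := hf.mem_Icc i
  have hiL : (i : ℝ) ≤ L := by exact_mod_cast i.is_lt.le
  rw [abs_le]
  constructor <;> linarith

theorem abs_blockDrift_le (hf : IsBlock Λ x f) : |blockDrift x f| ≤ L * L := by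
  refine (Finset.abs_sum_le_sum_abs _ _).trans ?_
  simpa using Finset.sum_le_card_nsmul Finset.univ _ _ fun i _ => hf.abs_sub_le i

theorem neg_rev (hf : IsBlock (-Λ) (-(x + (L - 1))) f) : IsBlock Λ x fun i => -f i.rev where
  strictMono _ _ hij := neg_lt_neg (hf.strictMono (Fin.rev_lt_rev.2 hij))
  mem i := hf.mem i.rev
  mem_Icc i := by
    obtain ⟨hxf, hfx⟩ := hf.mem_Icc i.rev
    constructor <;> linarith

end IsBlock

theorem blockDrift_neg_rev {L : ℕ} (x : ℝ) (f : Fin L → ℝ) :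
    blockDrift x (fun i => -f i.rev) = -blockDrift (-(x + (L - 1))) f := by
  rw [blockDrift, blockDrift, ← Equiv.sum_comp Fin.revPerm, ← Finset.sum_neg_distrib]
  refine Finset.sum_congr rfl fun i _ => ?_
  have hrev : ((i.rev : ℕ) : ℝ) = L - (i + 1) := by
    rw [Fin.val_rev, Nat.cast_sub i.is_lt]
    push_cast
    rfl
  simp only [Fin.revPerm_apply, Fin.rev_rev, hrev]
  ring

theorem sum_fin_cast_eq (L : ℕ) : ∑ i : Fin L, (i : ℝ) = L * (L - 1) / 2 := by
  rw [Fin.sum_univ_eq_sum_range (fun i => (i : ℝ)), eq_div_iff two_ne_zero]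
  induction L with
  | zero => simp
  | succ n ih => rw [Finset.sum_range_succ, add_mul, ih]; push_cast; ring

namespace HasCountingLowerBound

variable {Λ : Set ℝ} {b R : ℝ}

theorem exists_isBlock_le (hΛ : HasCountingLowerBound Λ b R) (hb : 1 < b) (hR : 0 < R) {L : ℕ}
    (hLR : R ≤ (L : ℝ) - 1) (hLb : (L : ℝ) ≤ b * (L - 1)) (x : ℝ) :
    ∃ f : Fin L → ℝ, IsBlock Λ x f ∧ ∀ i, f i ≤ x + (R + (i + 1) / b) := by
  have hb₀ : 0 < b := zero_lt_one.trans hb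
  have hcard : L ≤ (Λ ∩ Icc x (x + (L - 1))).ncard := by exact_mod_cast hLb.trans (hΛ _ hLR x)
  have hL : (0 : ℝ) < L := by linarith
  have hfin : (Λ ∩ Icc x (x + (L - 1))).Finite :=
    finite_of_ncard_pos ((Nat.cast_pos.1 hL).trans_le hcard)
  rw [ncard_eq_toFinset_card _ hfin] at hcard
  set s := hfin.toFinset with hs
  have hmem : ∀ i, s.orderEmbOfFin rfl i ∈ Λ ∩ Icc x (x + (L - 1)) := fun i =>
    hfin.mem_toFinset.1 (Finset.orderEmbOfFin_mem s rfl i)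
  refine ⟨fun i => s.orderEmbOfFin rfl (Fin.castLE hcard i), ⟨fun i j hij => ?_,
    fun i => (hmem _).1, fun i => (hmem _).2⟩, fun i => ?_⟩
  · exact (s.orderEmbOfFin rfl).strictMono ((Fin.castLE_lt_castLE_iff hcard).2 hij)
  · set r := R + ((i : ℝ) + 1) / b with hr
    rcases le_total (x + (L - 1)) (x + r) with hlast | hlast
    · exact (hmem _).2.2.trans hlast
    · refine orderEmbOfFin_le_of_lt_card_filter rfl ?_
      have hfilter : Λ ∩ Icc x (x + r) = s.filter (· ≤ x + r) := by
        ext y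
        simp only [hs, Finset.coe_filter, Finite.mem_toFinset, mem_inter_iff, mem_Icc,
          mem_ofPred_eq]
        exact ⟨fun ⟨hy, hxy, hyr⟩ => ⟨⟨hy, hxy, hyr.trans hlast⟩, hyr⟩,
          fun ⟨⟨hy, hxy, _⟩, hyr⟩ => ⟨hy, hxy, hyr⟩⟩
      have hcount := hΛ r (by rw [hr]; linarith [show 0 ≤ ((i : ℝ) + 1) / b by positivity]) x
      rw [hfilter, ncard_coe_finset, hr, mul_add, mul_div_cancel₀ _ hb₀.ne'] at hcount
      have hi : (i : ℝ) < ((s.filter (· ≤ x + r)).card : ℝ) := by linarith [mul_pos hb₀ hR]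
      exact_mod_cast hi

theorem eventually_exists_isBlock_nonpos (hΛ : HasCountingLowerBound Λ b R) (hb : 1 < b)
    (hR : 0 < R) :
    ∀ᶠ L : ℕ in atTop, ∀ x, ∃ f : Fin L → ℝ, IsBlock Λ x f ∧ blockDrift x f ≤ 0 := by
  have hb₀ : 0 < b := zero_lt_one.trans hb
  have hb' : 0 < 1 - 1 / b := sub_pos.2 ((div_lt_one hb₀).2 hb)
  have hlarge : ∀ t : ℝ, ∀ᶠ L : ℕ in atTop, t ≤ L := fun t =>
    tendsto_natCast_atTop_atTop.eventually_ge_atTop t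
  filter_upwards [hlarge (R + 1), hlarge (b / (b - 1)), hlarge (2 * (R + 1 / b) / (1 - 1 / b) + 1)]
    with L hLR hLb hLdrift x
  rw [div_le_iff₀ (by linarith)] at hLb
  rw [← le_sub_iff_add_le, div_le_iff₀ hb'] at hLdrift
  obtain ⟨f, hf, hfle⟩ := hΛ.exists_isBlock_le hb hR (L := L) (by linarith) (by linarith) x
  refine ⟨f, hf, ?_⟩
  calc blockDrift x f ≤ ∑ i : Fin L, (R + 1 / b - (1 - 1 / b) * (i : ℝ)) := by
        refine Finset.sum_le_sum fun i _ => ?_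
        linear_combination hfle i
    _ = L * (R + 1 / b - (1 - 1 / b) * (L - 1) / 2) := by
        rw [Finset.sum_sub_distrib, ← Finset.mul_sum, sum_fin_cast_eq]
        simp only [Finset.sum_const, Finset.card_univ, Fintype.card_fin, nsmul_eq_mul]
        ring
    _ ≤ 0 := mul_nonpos_of_nonneg_of_nonpos (Nat.cast_nonneg _) (by linarith)

theorem eventually_exists_isBlock_nonneg (hΛ : HasCountingLowerBound Λ b R) (hb : 1 < b)
    (hR : 0 < R) :
    ∀ᶠ L : ℕ in atTop, ∀ x, ∃ f : Fin L → ℝ, IsBlock Λ x f ∧ 0 ≤ blockDrift x f := by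
  filter_upwards [hΛ.neg.eventually_exists_isBlock_nonpos hb hR] with L hL x
  obtain ⟨f, hf, hdrift⟩ := hL (-(x + (L - 1)))
  exact ⟨_, hf.neg_rev, by rw [blockDrift_neg_rev]; exact neg_nonneg.2 hdrift⟩

end HasCountingLowerBound

theorem exists_int_orbit {α : Type*} [Nonempty α] {step : ℤ → α → α → Prop}
    (hnext : ∀ j a, ∃ b, step j a b) (hprev : ∀ j b, ∃ a, step j a b) :
    ∃ T : ℤ → α, ∀ j, step j (T j) (T (j + 1)) := by
  choose next hnext using hnext
  choose prev hprev using hprev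
  let a₀ : α := Classical.arbitrary α
  let future : ℕ → α := Nat.rec a₀ fun n a => next n a
  let past : ℕ → α := Nat.rec a₀ fun n a => prev (Int.negSucc n) a
  refine ⟨fun | Int.ofNat n => future n | Int.negSucc n => past (n + 1), ?_⟩
  rintro (n | _ | n)
  · exact hnext n (future n)
  · exact hprev (Int.negSucc 0) a₀
  · exact hprev (Int.negSucc (n + 1)) (past (n + 1))

/-- A greedy choice: a block drifting left follows a positive accumulated drift, and a block
drifting right any other. -/
theorem HasCountingLowerBound.exists_balanced_blocks {Λ : Set ℝ} {b R : ℝ}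
    (hΛ : HasCountingLowerBound Λ b R) (hb : 1 < b) (hR : 0 < R) :
    ∃ L : ℕ, 0 < L ∧ ∃ (f : ℤ → Fin L → ℝ) (T : ℤ → ℝ), (∀ j : ℤ, IsBlock Λ (j * L) (f j)) ∧
      (∀ j, |T j| ≤ L * L) ∧ ∀ j, T (j + 1) = T j + blockDrift (j * L) (f j) := by
  obtain ⟨L, hleft, hright, hL⟩ := ((hΛ.eventually_exists_isBlock_nonpos hb hR).and
    ((hΛ.eventually_exists_isBlock_nonneg hb hR).and (eventually_gt_atTop 0))).exists
  let step (j : ℤ) (t t' : Icc (-(L * L : ℝ)) (L * L)) : Prop :=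
    ∃ f : Fin L → ℝ, IsBlock Λ (j * L) f ∧ (t' : ℝ) = t + blockDrift (j * L) f
  have hnext : ∀ j t, ∃ t', step j t t' := by
    rintro j ⟨t, ht⟩
    rcases lt_or_ge 0 t with hpos | hneg
    · obtain ⟨f, hf, hdrift⟩ := hleft (j * L)
      have hbound := abs_le.1 hf.abs_blockDrift_le
      exact ⟨⟨_, by linarith, by linarith [ht.2]⟩, f, hf, rfl⟩
    · obtain ⟨f, hf, hdrift⟩ := hright (j * L)
      have hbound := abs_le.1 hf.abs_blockDrift_le
      exact ⟨⟨_, by linarith [ht.1], by linarith⟩, f, hf, rfl⟩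
  have hprev : ∀ j t', ∃ t, step j t t' := by
    rintro j ⟨t', ht'⟩
    rcases lt_or_ge 0 t' with hpos | hneg
    · obtain ⟨f, hf, hdrift⟩ := hright (j * L)
      have hbound := abs_le.1 hf.abs_blockDrift_le
      exact ⟨⟨t' - blockDrift (j * L) f, by linarith, by linarith [ht'.2]⟩, f, hf, by simp⟩
    · obtain ⟨f, hf, hdrift⟩ := hleft (j * L)
      have hbound := abs_le.1 hf.abs_blockDrift_le
      exact ⟨⟨t' - blockDrift (j * L) f, by linarith [ht'.1], by linarith⟩, f, hf, by simp⟩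
  have : Nonempty (Icc (-(L * L : ℝ)) (L * L)) :=
    ⟨⟨0, neg_nonpos.2 (mul_self_nonneg _), mul_self_nonneg _⟩⟩
  obtain ⟨T, hT⟩ := exists_int_orbit hnext hprev
  choose f hf hTf using hT
  exact ⟨L, hL, f, fun j => T j, hf, fun j => abs_le.2 (T j).2, hTf⟩

/-- `P` is a primitive of the displacements `lam k - k`, bounded by `K`: the discrepancy of `lam`
from the integers, summed over any interval of indices, is at most `2 * K`. -/
structure IsBoundedDiscrepancy (lam P : ℤ → ℝ) (K : ℝ) : Prop where
  abs_le : ∀ k, |P k| ≤ K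
  eq_add : ∀ k, P k = P (k - 1) + (lam k - k)

theorem IsBoundedDiscrepancy.abs_sub_le {lam P : ℤ → ℝ} {K : ℝ}
    (hP : IsBoundedDiscrepancy lam P K) (k : ℤ) : |lam k - k| ≤ 2 * K := by
  rw [← sub_eq_of_eq_add' (hP.eq_add k)]
  exact (abs_sub _ _).trans (by linarith [hP.abs_le k, hP.abs_le (k - 1)])

theorem exists_eq_sub_one_add (d : ℤ → ℝ) (t : ℝ) :
    ∃ P : ℤ → ℝ, P (-1) = t ∧ ∀ k, P k = P (k - 1) + d k := by
  obtain ⟨Q, hQ⟩ := exists_int_orbit (step := fun k x y => y = x + d k)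
    (fun k x => ⟨x + d k, rfl⟩) (fun k y => ⟨y - d k, (sub_add_cancel y _).symm⟩)
  refine ⟨fun k => Q (k + 1) - Q 0 + t, by simp, fun k => ?_⟩
  beta_reduce
  rw [hQ, sub_add_cancel]
  ring

theorem eq_add_sum_range_of_eq_sub_one_add {P d : ℤ → ℝ} (hP : ∀ k, P k = P (k - 1) + d k)
    (k : ℤ) (n : ℕ) : P (k + n - 1) = P (k - 1) + ∑ i ∈ Finset.range n, d (k + i) := by
  induction n with
  | zero => simp
  | succ n ih =>
    rw [Finset.sum_range_succ, ← add_assoc, ← ih, ← hP, Nat.cast_succ]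
    ring_nf

theorem exists_isBoundedDiscrepancy_of_blocks {L : ℕ} (hL : 0 < L) {lam T : ℤ → ℝ} {K M : ℝ}
    (hlam : ∀ k, |lam k - k| ≤ M) (hT : ∀ j, |T j| ≤ K)
    (hstep : ∀ j, T (j + 1) = T j +
      ∑ i ∈ Finset.range L, (lam (j * L + i) - (j * L + i : ℤ))) :
    ∃ P, IsBoundedDiscrepancy lam P (K + L * M) := by
  have hL' : (0 : ℤ) < L := by exact_mod_cast hL
  obtain ⟨P, hP₀, hP⟩ := exists_eq_sub_one_add (fun k => lam k - k) (T 0)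
  have hPsum := eq_add_sum_range_of_eq_sub_one_add hP
  have hPT : ∀ j : ℤ, P (j * L - 1) = T j := by
    have hper : Function.Periodic (fun j : ℤ => P (j * L - 1) - T j) 1 := fun j => by
      simp only [hstep j, add_one_mul, hPsum]
      ring
    intro j
    have h := hper.int_mul_eq j
    simpa [hP₀, sub_eq_zero] using h
  refine ⟨P, fun k => ?_, hP⟩
  set j := k / L
  set i := (k % L).toNat
  have hi : i < L := by
    have := Int.emod_lt_of_pos k hL'
    omega
  have hk : k = j * L + (i + 1 : ℕ) - 1 := by
    rw [Nat.cast_succ, Int.toNat_of_nonneg (Int.emod_nonneg k hL'.ne')]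
    linarith [Int.ediv_mul_add_emod k L]
  have hpartial : |∑ l ∈ Finset.range (i + 1), (lam (j * L + l) - (j * L + l : ℤ))| ≤ L * M := by
    refine (Finset.abs_sum_le_sum_abs _ _).trans
      ((Finset.sum_le_card_nsmul _ _ M fun _ _ => hlam _).trans ?_)
    have : 0 ≤ M := (abs_nonneg _).trans (hlam 0)
    rw [Finset.card_range, nsmul_eq_mul]
    gcongr
    exact hi
  rw [hk, hPsum, hPT]
  exact (abs_add_le _ _).trans (add_le_add (hT j) hpartial)

theorem strictMono_of_isBlock {Λ : Set ℝ} {L : ℕ} [NeZero L] {f : ℤ → Fin L → ℝ}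
    (hf : ∀ j : ℤ, IsBlock Λ (j * L) (f j)) :
    StrictMono fun k => Function.uncurry f (Int.divModEquiv L k) := by
  intro k k' hkk'
  obtain ⟨⟨j, i⟩, rfl⟩ := (Int.divModEquiv L).symm.surjective k
  obtain ⟨⟨j', i'⟩, rfl⟩ := (Int.divModEquiv L).symm.surjective k'
  simp only [Equiv.apply_symm_apply, Function.uncurry_apply_pair]
  simp only [Int.divModEquiv_symm_apply] at hkk'
  have hi' := i'.is_lt
  rcases lt_trichotomy j j' with hj | rfl | hj
  · have hjj' : (j : ℝ) * L + L ≤ j' * L := by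
      rw [← add_one_mul]
      gcongr
      exact_mod_cast hj
    linarith [((hf j).mem_Icc i).2, ((hf j').mem_Icc i').1]
  · exact (hf j).strictMono (by rw [Fin.lt_def]; omega)
  · nlinarith

theorem exists_strictMono_isBoundedDiscrepancy {Λ : Set ℝ} (hΛ : 1 < lowerBeurlingDensity Λ) :
    ∃ (lam P : ℤ → ℝ) (K : ℝ),
      StrictMono lam ∧ (∀ k, lam k ∈ Λ) ∧ IsBoundedDiscrepancy lam P K := by
  obtain ⟨b, hb, R, hR, hcount⟩ :=
    exists_hasCountingLowerBound_of_lt_lowerBeurlingDensity zero_le_one hΛ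
  obtain ⟨L, hL, f, T, hf, hTbound, hTstep⟩ := hcount.exists_balanced_blocks hb hR
  have : NeZero L := ⟨hL.ne'⟩
  let lam (k : ℤ) : ℝ := Function.uncurry f (Int.divModEquiv L k)
  have hlam : ∀ (j : ℤ) (i : Fin L), lam (j * L + (i : ℕ)) = f j i := fun j i => by
    simp only [lam, ← Int.divModEquiv_symm_apply L (j, i), Equiv.apply_symm_apply,
      Function.uncurry_apply_pair]
  have hdisp : ∀ k, |lam k - k| ≤ L := by
    intro k
    obtain ⟨⟨j, i⟩, rfl⟩ := (Int.divModEquiv L).symm.surjective k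
    rw [Int.divModEquiv_symm_apply, hlam]
    simpa using (hf j).abs_sub_le i
  obtain ⟨P, hP⟩ := exists_isBoundedDiscrepancy_of_blocks hL hdisp hTbound fun j => by
    rw [hTstep, ← Fin.sum_univ_eq_sum_range
      (fun i => lam (j * L + i) - ((j * L + i : ℤ) : ℝ))]
    simp only [hlam, blockDrift]
    push_cast
    rfl
  exact ⟨lam, P, _, strictMono_of_isBlock hf, fun k => (hf _).mem _, hP⟩

end Selection

section InfiniteMatrices

variable {ι κ ν 𝕜 : Type*} [NormedField 𝕜]

theorem summable_mul_and_sq_tsum_mul_le {w x : κ → ℝ} (hw₀ : ∀ j, 0 ≤ w j) (hx₀ : ∀ j, 0 ≤ x j)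
    (hw : Summable w) (hwx : Summable fun j => w j * x j ^ 2) :
    (Summable fun j => w j * x j) ∧
      (∑' j, w j * x j) ^ 2 ≤ (∑' j, w j) * ∑' j, w j * x j ^ 2 := by
  have hsqrt : ∀ j, √(w j) * (√(w j) * x j) = w j * x j := fun j => by
    rw [← mul_assoc, Real.mul_self_sqrt (hw₀ j)]
  have hsq : ∀ j, √(w j) ^ (2 : ℝ) = w j := fun j => by
    rw [Real.rpow_two, Real.sq_sqrt (hw₀ j)]
  have hsqx : ∀ j, (√(w j) * x j) ^ (2 : ℝ) = w j * x j ^ 2 := fun j => by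
    rw [Real.rpow_two, mul_pow, Real.sq_sqrt (hw₀ j)]
  obtain ⟨hsum, hle⟩ := Real.summable_and_inner_le_Lp_mul_Lq_tsum_of_nonneg
    Real.HolderConjugate.two_two (f := fun j => √(w j)) (g := fun j => √(w j) * x j)
    (fun j => Real.sqrt_nonneg _) (fun j => mul_nonneg (Real.sqrt_nonneg _) (hx₀ j))
    (by simpa only [hsq] using hw) (by simpa only [hsqx] using hwx)
  simp only [hsqrt, hsq, hsqx, ← Real.sqrt_eq_rpow] at hsum hle
  refine ⟨hsum, ?_⟩
  calc (∑' j, w j * x j) ^ 2 ≤ (√(∑' j, w j) * √(∑' j, w j * x j ^ 2)) ^ 2 :=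
        pow_le_pow_left₀ (tsum_nonneg fun j => mul_nonneg (hw₀ j) (hx₀ j)) hle 2
    _ = (∑' j, w j) * ∑' j, w j * x j ^ 2 := by
        rw [mul_pow, Real.sq_sqrt (tsum_nonneg hw₀),
          Real.sq_sqrt (tsum_nonneg fun j => mul_nonneg (hw₀ j) (sq_nonneg _))]

theorem summable_and_tsum_norm_sq_tsum_mul_le {M : ι → κ → 𝕜} {R C : ℝ} (hR₀ : 0 ≤ R)
    (hrow : ∀ i, Summable fun j => ‖M i j‖) (hR : ∀ i, ∑' j, ‖M i j‖ ≤ R)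
    (hcol : ∀ j, Summable fun i => ‖M i j‖) (hC : ∀ j, ∑' i, ‖M i j‖ ≤ C)
    {x : κ → 𝕜} (hx : Summable fun j => ‖x j‖ ^ 2) :
    (Summable fun i => ‖∑' j, M i j * x j‖ ^ 2) ∧
      ∑' i, ‖∑' j, M i j * x j‖ ^ 2 ≤ R * C * ∑' j, ‖x j‖ ^ 2 := by
  have hcolx : ∀ j, ∑' i, ‖M i j‖ * ‖x j‖ ^ 2 ≤ C * ‖x j‖ ^ 2 := fun j => by
    rw [tsum_mul_right]
    gcongr
    exact hC j
  have hcolsum : Summable fun j => ∑' i, ‖M i j‖ * ‖x j‖ ^ 2 :=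
    .of_nonneg_of_le (fun j => tsum_nonneg fun i => by positivity) hcolx (hx.mul_left C)
  have hprod : Summable fun p : κ × ι => ‖M p.2 p.1‖ * ‖x p.1‖ ^ 2 :=
    (summable_prod_of_nonneg fun p => mul_nonneg (norm_nonneg _) (sq_nonneg ‖x p.1‖)).2
      ⟨fun j => (hcol j).mul_right (‖x j‖ ^ 2), hcolsum⟩
  have hprod' : Summable fun p : ι × κ => ‖M p.1 p.2‖ * ‖x p.2‖ ^ 2 := hprod.prod_symm
  have hpt : ∀ i, ‖∑' j, M i j * x j‖ ^ 2 ≤ R * ∑' j, ‖M i j‖ * ‖x j‖ ^ 2 := by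
    intro i
    obtain ⟨hsum, hle⟩ := summable_mul_and_sq_tsum_mul_le (fun j => norm_nonneg (M i j))
      (fun j => norm_nonneg (x j)) (hrow i) (hprod'.prod_factor i)
    simp only [← norm_mul] at hsum
    calc ‖∑' j, M i j * x j‖ ^ 2 ≤ (∑' j, ‖M i j‖ * ‖x j‖) ^ 2 := by
          simpa only [norm_mul] using pow_le_pow_left₀ (norm_nonneg _)
            (norm_tsum_le_tsum_norm hsum) 2
      _ ≤ (∑' j, ‖M i j‖) * ∑' j, ‖M i j‖ * ‖x j‖ ^ 2 := hle
      _ ≤ R * ∑' j, ‖M i j‖ * ‖x j‖ ^ 2 :=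
          mul_le_mul_of_nonneg_right (hR i) (tsum_nonneg fun j => by positivity)
  have hrowsum : Summable fun i => R * ∑' j, ‖M i j‖ * ‖x j‖ ^ 2 := hprod'.prod.mul_left R
  have hsum := Summable.of_nonneg_of_le (fun i => sq_nonneg _) hpt hrowsum
  refine ⟨hsum, ?_⟩
  calc ∑' i, ‖∑' j, M i j * x j‖ ^ 2 ≤ ∑' i, R * ∑' j, ‖M i j‖ * ‖x j‖ ^ 2 :=
        hsum.tsum_le_tsum hpt hrowsum
    _ = R * ∑' j, ∑' i, ‖M i j‖ * ‖x j‖ ^ 2 := by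
        rw [tsum_mul_left, ← Summable.tsum_comm (f := fun i j => ‖M i j‖ * ‖x j‖ ^ 2) hprod']
    _ ≤ R * ∑' j, C * ‖x j‖ ^ 2 :=
        mul_le_mul_of_nonneg_left (hcolsum.tsum_le_tsum hcolx (hx.mul_left C)) hR₀
    _ = R * C * ∑' j, ‖x j‖ ^ 2 := by rw [tsum_mul_left, mul_assoc]

theorem tsum_mul_tsum_mul_assoc [CompleteSpace 𝕜] {u : κ → 𝕜} {Q : κ → ν → 𝕜} {c : ν → 𝕜}
    {R T : ℝ} (hu : Summable fun j => ‖u j‖) (hQ : ∀ j, Summable fun k => ‖Q j k‖)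
    (hR : ∀ j, ∑' k, ‖Q j k‖ ≤ R) (hc : ∀ k, ‖c k‖ ≤ T) :
    ∑' j, u j * ∑' k, Q j k * c k = ∑' k, (∑' j, u j * Q j k) * c k := by
  have hprod : Summable fun p : κ × ν => ‖u p.1‖ * ‖Q p.1 p.2‖ := by
    have hrow : ∀ j, ∑' k, ‖u j‖ * ‖Q j k‖ ≤ ‖u j‖ * R := fun j => by
      rw [tsum_mul_left]
      exact mul_le_mul_of_nonneg_left (hR j) (norm_nonneg _)
    exact (summable_prod_of_nonneg fun p => mul_nonneg (norm_nonneg _) (norm_nonneg _)).2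
      ⟨fun j => (hQ j).mul_left ‖u j‖,
        .of_nonneg_of_le (fun j => tsum_nonneg fun k => by positivity) hrow (hu.mul_right R)⟩
  have hsum : Summable (Function.uncurry fun j k => u j * Q j k * c k) := by
    refine .of_norm_bounded (hprod.mul_right T) fun ⟨j, k⟩ => ?_
    rw [Function.uncurry_apply_pair, norm_mul, norm_mul]
    exact mul_le_mul_of_nonneg_left (hc k) (mul_nonneg (norm_nonneg _) (norm_nonneg _))
  simp only [← tsum_mul_left, ← tsum_mul_right, ← mul_assoc]
  exact (Summable.tsum_comm hsum).symm

theorem exists_norm_le_of_summable_norm_sq {c : κ → 𝕜} (hc : Summable fun n => ‖c n‖ ^ 2) :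
    ∃ T, ∀ k, ‖c k‖ ≤ T :=
  ⟨√(∑' n, ‖c n‖ ^ 2), fun k => Real.le_sqrt_of_sq_le (hc.le_tsum k fun _ _ => sq_nonneg _)⟩

/-- The matrix identity `M * Q = 1`, with entries of the product read as (possibly infinite) sums.
It carries no summability: a divergent sum is `0`. -/
def MulEqOne [DecidableEq ι] (M : ι → κ → 𝕜) (Q : κ → ι → 𝕜) : Prop :=
  ∀ i k, ∑' j, M i j * Q j k = (1 : Matrix ι ι 𝕜) i k

/-- The two-sided geometric series `∑ exp (-a |k|)`, the norm scale for matrices with exponential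
off-diagonal decay. -/
noncomputable def expSum (a : ℝ) : ℝ :=
  ∑' k : ℤ, Real.exp (-a * |(k : ℝ)|)

theorem summable_exp_neg_mul_abs {a : ℝ} (ha : 0 < a) :
    Summable fun k : ℤ => Real.exp (-a * |(k : ℝ)|) := by
  have hnat : Summable fun n : ℕ => Real.exp (-a * |((n : ℤ) : ℝ)|) := by
    refine (Real.summable_exp_nat_mul_iff.2 (neg_neg_of_pos ha)).congr fun n => ?_
    rw [Int.cast_natCast, Nat.abs_cast, mul_comm]
  refine .of_nat_of_neg hnat ?_
  simpa only [Int.cast_neg, abs_neg] using hnat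

theorem hasSum_exp_neg_mul_abs_sub {a : ℝ} (ha : 0 < a) (i : ℤ) :
    HasSum (fun j : ℤ => Real.exp (-a * |(i : ℝ) - j|)) (expSum a) := by
  have h := (Equiv.subLeft i).hasSum_iff.2 (summable_exp_neg_mul_abs ha).hasSum
  simpa only [Function.comp_def, Equiv.subLeft_apply, Int.cast_sub, expSum] using h

/-- Off-diagonal decay of a bi-infinite matrix, at rate `a` and with constant `C`: the class in
which the inverse of the Gaussian sampling matrix is found. -/
def HasExpDecay (a C : ℝ) (M : ℤ → ℤ → 𝕜) : Prop :=
  ∀ i j, ‖M i j‖ ≤ C * Real.exp (-a * |(i : ℝ) - j|)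

namespace HasExpDecay

variable {a C D : ℝ} {M Q : ℤ → ℤ → 𝕜}

theorem nonneg (hM : HasExpDecay a C M) : 0 ≤ C :=
  nonneg_of_mul_nonneg_left ((norm_nonneg _).trans (hM 0 0)) (Real.exp_pos _)

theorem transpose (hM : HasExpDecay a C M) : HasExpDecay a C fun i j => M j i := fun i j => by
  rw [abs_sub_comm]
  exact hM j i

theorem norm_le (hM : HasExpDecay a C M) (ha : 0 ≤ a) (i j : ℤ) : ‖M i j‖ ≤ C :=
  (hM i j).trans <| mul_le_of_le_one_right hM.nonneg <| Real.exp_le_one_iff.2 <|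
    mul_nonpos_of_nonpos_of_nonneg (neg_nonpos.2 ha) (abs_nonneg _)

theorem summable_norm (hM : HasExpDecay a C M) (ha : 0 < a) (i : ℤ) :
    Summable fun j => ‖M i j‖ :=
  .of_nonneg_of_le (fun _ => norm_nonneg _) (hM i)
    ((hasSum_exp_neg_mul_abs_sub ha i).summable.mul_left C)

theorem tsum_norm_le (hM : HasExpDecay a C M) (ha : 0 < a) (i : ℤ) :
    ∑' j, ‖M i j‖ ≤ C * expSum a := by
  have h := (hasSum_exp_neg_mul_abs_sub ha i).mul_left C
  exact (hM.summable_norm ha i).tsum_le_tsum (hM i) h.summable |>.trans_eq h.tsum_eq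

theorem summable_and_tsum_norm_sq_le (hM : HasExpDecay a C M) (ha : 0 < a) {x : ℤ → 𝕜}
    (hx : Summable fun j => ‖x j‖ ^ 2) :
    (Summable fun i => ‖∑' j, M i j * x j‖ ^ 2) ∧
      ∑' i, ‖∑' j, M i j * x j‖ ^ 2 ≤ (C * expSum a) ^ 2 * ∑' j, ‖x j‖ ^ 2 := by
  rw [sq (C * expSum a)]
  exact summable_and_tsum_norm_sq_tsum_mul_le
    (mul_nonneg hM.nonneg (tsum_nonneg fun _ => (Real.exp_pos _).le))
    (hM.summable_norm ha) (hM.tsum_norm_le ha)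
    (hM.transpose.summable_norm ha) (hM.transpose.tsum_norm_le ha) hx

theorem tsum_mul_tsum_mul_eq_self [CompleteSpace 𝕜] (hM : HasExpDecay a C M)
    (hQ : HasExpDecay a D Q) (ha : 0 < a) (hMQ : MulEqOne M Q) {x : ℤ → 𝕜}
    (hx : Summable fun j => ‖x j‖ ^ 2) (i : ℤ) :
    ∑' j, M i j * ∑' k, Q j k * x k = x i := by
  obtain ⟨T, hT⟩ := exists_norm_le_of_summable_norm_sq hx
  rw [tsum_mul_tsum_mul_assoc (hM.summable_norm ha i) (hQ.summable_norm ha) (hQ.tsum_norm_le ha) hT,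
    tsum_eq_single i]
  · rw [hMQ i i, Matrix.one_apply_eq, one_mul]
  · intro k hk
    rw [hMQ i k, Matrix.one_apply_ne' hk, zero_mul]

theorem tendsto_tsum_mul {α : Type*} {l : Filter α} {A B : α → ℤ → ℤ → 𝕜} (ha : 0 < a)
    [CompleteSpace 𝕜] (hA : ∀ N, HasExpDecay a C (A N)) (hB : ∀ N, HasExpDecay a D (B N))
    (hM : Tendsto A l (nhds M)) (hQ : Tendsto B l (nhds Q)) (i k : ℤ) :
    Tendsto (fun N => ∑' j, A N i j * B N j k) l (nhds (∑' j, M i j * Q j k)) := by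
  have hentry {X : α → ℤ → ℤ → 𝕜} {Y} (h : Tendsto X l (nhds Y)) (i j) :
      Tendsto (fun N => X N i j) l (nhds (Y i j)) := tendsto_pi_nhds.1 (tendsto_pi_nhds.1 h i) j
  refine tendsto_tsum_of_dominated_convergence
    ((hasSum_exp_neg_mul_abs_sub ha i).summable.mul_left C |>.mul_right D)
    (fun j => (hentry hM i j).mul (hentry hQ j k)) (.of_forall fun N j => ?_)
  rw [norm_mul]
  exact mul_le_mul (hA N i j) ((hB N).norm_le ha.le j k) (norm_nonneg _)
    ((norm_nonneg _).trans (hA N i j))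

theorem isCompact_setOf [ProperSpace 𝕜] (a C : ℝ) :
    IsCompact {M : ℤ → ℤ → 𝕜 | HasExpDecay a C M} := by
  have h := isCompact_univ_pi fun i : ℤ => isCompact_univ_pi fun j : ℤ =>
    isCompact_closedBall (0 : 𝕜) (C * Real.exp (-a * |(i : ℝ) - j|))
  simpa only [Set.pi, Set.mem_univ, mem_closedBall_zero_iff, forall_const, Set.mem_ofPred_eq,
    HasExpDecay] using h

theorem exists_inverse_of_eventually [ProperSpace 𝕜] (hM : HasExpDecay a C M) (ha : 0 < a)
    {B : ℕ → ℤ → ℤ → 𝕜} (hB : ∀ N, HasExpDecay a D (B N))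
    (hMB : ∀ i k, ∀ᶠ N in atTop, ∑' j, M i j * B N j k = (1 : Matrix ℤ ℤ 𝕜) i k)
    (hBM : ∀ i k, ∀ᶠ N in atTop, ∑' j, B N i j * M j k = (1 : Matrix ℤ ℤ 𝕜) i k) :
    ∃ Q, HasExpDecay a D Q ∧ MulEqOne M Q ∧ MulEqOne Q M := by
  obtain ⟨Q, hQ, φ, hφ, hlim⟩ := (isCompact_setOf a D).tendsto_subseq hB
  refine ⟨Q, hQ, fun i k => ?_, fun i k => ?_⟩
  · exact tendsto_nhds_unique
      (tendsto_tsum_mul ha (fun _ => hM) (fun N => hB (φ N)) tendsto_const_nhds hlim i k)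
      (tendsto_const_nhds.congr' ((hφ.tendsto_atTop.eventually (hMB i k)).mono fun _ h => h.symm))
  · exact tendsto_nhds_unique
      (tendsto_tsum_mul ha (fun N => hB (φ N)) (fun _ => hM) hlim tendsto_const_nhds i k)
      (tendsto_const_nhds.congr' ((hφ.tendsto_atTop.eventually (hBM i k)).mono fun _ h => h.symm))

end HasExpDecay

end InfiniteMatrices

section FiniteSections

open Polynomial

theorem norm_coeff_prod_basisDivisor_mul_pow_le {ι 𝕜 : Type*} [NormedField 𝕜] (s : Finset ι)
    (x : 𝕜) (z : ι → 𝕜) {r : ℝ} (hr : 0 ≤ r) (j : ℕ) :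
    ‖(∏ k ∈ s, Lagrange.basisDivisor x (z k)).coeff j‖ * r ^ j ≤
      ∏ k ∈ s, (r + ‖z k‖) / ‖x - z k‖ := by
  classical
  induction s using Finset.induction_on generalizing j with
  | empty => rcases j with _ | j <;> simp [coeff_one]
  | insert k s hk ih =>
    rw [Finset.prod_insert hk, Finset.prod_insert hk, Lagrange.basisDivisor, mul_assoc,
      coeff_C_mul, norm_mul, norm_inv, div_eq_inv_mul, mul_assoc, mul_assoc]
    set Q := ∏ k ∈ s, Lagrange.basisDivisor x (z k)
    refine mul_le_mul_of_nonneg_left ?_ (inv_nonneg.2 (norm_nonneg _))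
    have : 0 ≤ ∏ k ∈ s, (r + ‖z k‖) / ‖x - z k‖ :=
      Finset.prod_nonneg fun k _ => by positivity
    rcases j with _ | j
    · calc ‖((X - C (z k)) * Q).coeff 0‖ * r ^ 0 = ‖z k‖ * (‖Q.coeff 0‖ * r ^ 0) := by
            simp [mul_coeff_zero]
        _ ≤ (r + ‖z k‖) * ∏ k ∈ s, (r + ‖z k‖) / ‖x - z k‖ :=
            mul_le_mul (le_add_of_nonneg_left hr) (ih 0) (by positivity) (by positivity)
    · calc ‖((X - C (z k)) * Q).coeff (j + 1)‖ * r ^ (j + 1)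
          = ‖Q.coeff j - z k * Q.coeff (j + 1)‖ * r ^ (j + 1) := by
            rw [sub_mul, coeff_sub, coeff_X_mul, coeff_C_mul]
        _ ≤ (‖Q.coeff j‖ + ‖z k‖ * ‖Q.coeff (j + 1)‖) * r ^ (j + 1) := by
            rw [← norm_mul]
            gcongr
            exact norm_sub_le _ _
        _ = r * (‖Q.coeff j‖ * r ^ j) + ‖z k‖ * (‖Q.coeff (j + 1)‖ * r ^ (j + 1)) := by ring
        _ ≤ (r + ‖z k‖) * ∏ k ∈ s, (r + ‖z k‖) / ‖x - z k‖ := by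
            rw [add_mul]
            gcongr
            exacts [ih j, ih (j + 1)]

theorem exp_max_mul_exp_neg_abs_sub (u v : ℝ) :
    Real.exp (max u v) * Real.exp (-|u - v|) = Real.exp (min u v) := by
  rw [← Real.exp_add, ← max_sub_min_eq_abs', neg_sub, add_sub_cancel]

theorem exp_add_exp_le (u v : ℝ) :
    Real.exp u + Real.exp v ≤ Real.exp (max u v + Real.exp (-|u - v|)) := by
  calc Real.exp u + Real.exp v = Real.exp (max u v) * (Real.exp (-|u - v|) + 1) := by
        rw [mul_add, exp_max_mul_exp_neg_abs_sub, mul_one, Real.exp_monotone.map_max,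
          Real.exp_monotone.map_min, min_add_max]
    _ ≤ Real.exp (max u v + Real.exp (-|u - v|)) := by
        rw [Real.exp_add]
        gcongr
        exact Real.add_one_le_exp _

theorem exp_neg_div_one_sub_le {w q : ℝ} (hw : 0 ≤ w) (hwq : w ≤ q) (hq : q < 1) :
    Real.exp (-(w / (1 - q))) ≤ 1 - w := by
  have hw₁ : 0 < 1 - w := by linarith
  have : 0 < 1 - q := by linarith
  rw [Real.exp_neg, inv_le_comm₀ (Real.exp_pos _) hw₁]
  calc (1 - w)⁻¹ = w / (1 - w) + 1 := by field_simp; ring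
    _ ≤ w / (1 - q) + 1 := by gcongr
    _ ≤ Real.exp (w / (1 - q)) := Real.add_one_le_exp _

theorem exp_max_sub_le_abs_exp_sub_exp {u v q : ℝ} (huv : Real.exp (-|u - v|) ≤ q) (hq : q < 1) :
    Real.exp (max u v - Real.exp (-|u - v|) / (1 - q)) ≤ |Real.exp u - Real.exp v| := by
  calc Real.exp (max u v - Real.exp (-|u - v|) / (1 - q))
      ≤ Real.exp (max u v) * (1 - Real.exp (-|u - v|)) := by
        rw [sub_eq_add_neg, Real.exp_add]
        gcongr
        exact exp_neg_div_one_sub_le (Real.exp_pos _).le huv hq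
    _ = |Real.exp u - Real.exp v| := by
        rw [mul_sub, exp_max_mul_exp_neg_abs_sub, mul_one, Real.exp_monotone.map_max,
          Real.exp_monotone.map_min, max_sub_min_eq_abs']

theorem mul_abs_sub_le_abs_sub_of_add_le {f : ℤ → ℝ} {ε : ℝ} (hf : ∀ j, f j + ε ≤ f (j + 1))
    (j k : ℤ) : ε * |(j : ℝ) - k| ≤ |f j - f k| := by
  have hmono : Monotone fun j : ℤ => f j - ε * j := monotone_int_of_le_succ fun j => by
    push_cast
    linarith [hf j]
  wlog hkj : k ≤ j generalizing j k
  · rw [abs_sub_comm, abs_sub_comm (f j)]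
    exact this k j (le_of_not_ge hkj)
  rw [abs_of_nonneg (sub_nonneg.2 (Int.cast_le.2 hkj))]
  exact le_trans (by linarith [hmono hkj]) (le_abs_self _)

section NodeProducts

variable {u : ℤ → ℝ} {δ : ℝ}

theorem sum_exp_neg_abs_sub_le (hδ : 0 < δ) (hu : ∀ j k : ℤ, δ * |(j : ℝ) - k| ≤ |u j - u k|)
    (t : Finset ℤ) (m : ℤ) : ∑ k ∈ t, Real.exp (-|u m - u k|) ≤ expSum δ := by
  refine (Finset.sum_le_sum fun k _ => Real.exp_le_exp.2 ?_).trans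
    (sum_le_hasSum t (fun k _ => (Real.exp_pos _).le) (hasSum_exp_neg_mul_abs_sub hδ m))
  rw [neg_mul]
  exact neg_le_neg (hu m k)

theorem prod_exp_add_exp_le (hδ : 0 < δ) (hu : ∀ j k : ℤ, δ * |(j : ℝ) - k| ≤ |u j - u k|)
    (t : Finset ℤ) (n : ℤ) :
    ∏ k ∈ t, (Real.exp (u n) + Real.exp (u k)) ≤
      Real.exp (∑ k ∈ t, max (u n) (u k) + expSum δ) := by
  calc ∏ k ∈ t, (Real.exp (u n) + Real.exp (u k))
      ≤ ∏ k ∈ t, Real.exp (max (u n) (u k) + Real.exp (-|u n - u k|)) :=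
        Finset.prod_le_prod (fun k _ => by positivity) fun k _ => exp_add_exp_le _ _
    _ ≤ Real.exp (∑ k ∈ t, max (u n) (u k) + expSum δ) := by
        rw [← Real.exp_sum, Finset.sum_add_distrib]
        gcongr
        exact sum_exp_neg_abs_sub_le hδ hu t n

theorem exp_sum_max_sub_le_prod_abs_exp_sub (hδ : 0 < δ)
    (hu : ∀ j k : ℤ, δ * |(j : ℝ) - k| ≤ |u j - u k|) {t : Finset ℤ} {m : ℤ} (hm : m ∉ t) :
    Real.exp (∑ k ∈ t, max (u m) (u k) - expSum δ / (1 - Real.exp (-δ))) ≤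
      ∏ k ∈ t, |Real.exp (u m) - Real.exp (u k)| := by
  have hq : Real.exp (-δ) < 1 := Real.exp_lt_one_iff.2 (neg_neg_of_pos hδ)
  have hnear : ∀ k ∈ t, Real.exp (-|u m - u k|) ≤ Real.exp (-δ) := by
    intro k hk
    have hmk : (1 : ℝ) ≤ |(m : ℝ) - k| := by
      exact_mod_cast Int.one_le_abs (sub_ne_zero.2 (ne_of_mem_of_not_mem hk hm).symm)
    exact Real.exp_le_exp.2 (neg_le_neg ((le_mul_of_one_le_right hδ.le hmk).trans (hu m k)))
  calc Real.exp (∑ k ∈ t, max (u m) (u k) - expSum δ / (1 - Real.exp (-δ)))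
      ≤ ∏ k ∈ t, Real.exp (max (u m) (u k) - Real.exp (-|u m - u k|) / (1 - Real.exp (-δ))) := by
        rw [← Real.exp_sum, Finset.sum_sub_distrib, ← Finset.sum_div]
        have : 0 ≤ 1 - Real.exp (-δ) := sub_nonneg.2 hq.le
        gcongr
        exact sum_exp_neg_abs_sub_le hδ hu t m
    _ ≤ ∏ k ∈ t, |Real.exp (u m) - Real.exp (u k)| :=
        Finset.prod_le_prod (fun k _ => (Real.exp_pos _).le) fun k hk =>
          exp_max_sub_le_abs_exp_sub_exp (hnear k hk) hq

/-- Only the moduli of the nodes are assumed to be well spread, so the difference of two nodes is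
bounded below by the difference of their moduli. -/
theorem norm_coeff_basis_mul_exp_le {𝕜 : Type*} [NormedField 𝕜] {z : ℤ → 𝕜} (hδ : 0 < δ)
    (hu : ∀ j k : ℤ, δ * |(j : ℝ) - k| ≤ |u j - u k|) (hz : ∀ k, ‖z k‖ = Real.exp (u k))
    (s : Finset ℤ) (n m : ℤ) (j : ℕ) :
    ‖(Lagrange.basis s z m).coeff j‖ * Real.exp (j * u n) ≤
      Real.exp (∑ k ∈ s.erase m, (max (u n) (u k) - max (u m) (u k)) +
        (expSum δ + expSum δ / (1 - Real.exp (-δ)))) := by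
  have hdiff : ∀ k, |Real.exp (u m) - Real.exp (u k)| ≤ ‖z m - z k‖ := fun k => by
    rw [← hz, ← hz]
    exact abs_norm_sub_norm_le _ _
  calc ‖(Lagrange.basis s z m).coeff j‖ * Real.exp (j * u n)
      ≤ ∏ k ∈ s.erase m, (Real.exp (u n) + ‖z k‖) / ‖z m - z k‖ := by
        rw [Real.exp_nat_mul]
        exact norm_coeff_prod_basisDivisor_mul_pow_le _ _ _ (Real.exp_pos _).le j
    _ = (∏ k ∈ s.erase m, (Real.exp (u n) + Real.exp (u k))) /
          ∏ k ∈ s.erase m, ‖z m - z k‖ := by simp only [hz, Finset.prod_div_distrib]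
    _ ≤ Real.exp (∑ k ∈ s.erase m, max (u n) (u k) + expSum δ) /
          Real.exp (∑ k ∈ s.erase m, max (u m) (u k) - expSum δ / (1 - Real.exp (-δ))) := by
        gcongr
        · exact prod_exp_add_exp_le hδ hu _ n
        · exact (exp_sum_max_sub_le_prod_abs_exp_sub hδ hu (Finset.notMem_erase m s)).trans
            (Finset.prod_le_prod (fun _ _ => abs_nonneg _) fun k _ => hdiff k)
    _ = Real.exp (∑ k ∈ s.erase m, (max (u n) (u k) - max (u m) (u k)) +
          (expSum δ + expSum δ / (1 - Real.exp (-δ)))) := by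
        rw [← Real.exp_sub, Finset.sum_sub_distrib]
        ring_nf

end NodeProducts

theorem sum_Icc_max_eq {lam U : ℤ → ℝ} (hlam : Monotone lam) (hU : ∀ k, U k = U (k - 1) + lam k)
    {A n M : ℤ} (hA : A ≤ n) (hM : n ≤ M) :
    ∑ k ∈ Finset.Icc A M, max (lam n) (lam k) = (n - A + 1) * lam n + (U M - U n) := by
  induction M, hM using Int.leInduction with
  | base =>
    have hmax : ∀ k ∈ Finset.Icc A n, max (lam n) (lam k) = lam n := fun k hk =>
      max_eq_left (hlam (Finset.mem_Icc.1 hk).2)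
    have hcard : (((n + 1 - A).toNat : ℕ) : ℝ) = n - A + 1 := by
      rw [← Int.cast_natCast, Int.toNat_of_nonneg (by omega)]
      push_cast
      ring
    rw [Finset.sum_congr rfl hmax, Finset.sum_const, nsmul_eq_mul, Int.card_Icc, hcard, sub_self,
      add_zero]
  | succ M hM ih =>
    rw [← Finset.insert_Icc_right_eq_Icc_add_one (by omega), Finset.sum_insert (by simp), ih,
      max_eq_right (hlam (by omega)), hU (M + 1), add_sub_cancel_right]
    ring

theorem sum_Icc_coeff_mul_pow_eq_eval {R : Type*} [CommSemiring R] {p : R[X]} {N : ℕ}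
    (hp : p.natDegree < 2 * N + 1) (x : R) :
    ∑ n ∈ Finset.Icc (-N : ℤ) N, p.coeff (n + N).toNat * x ^ (n + N).toNat = p.eval x := by
  rw [eval_eq_sum_range' hp]
  refine Finset.sum_nbij' (fun n => (n + N).toNat) (fun j => j - N) ?_ ?_ ?_ ?_ ?_ <;>
    simp only [Finset.mem_Icc, Finset.mem_range, implies_true] <;> omega

theorem sum_mul_eq_one_comm {ι 𝕜 : Type*} [DecidableEq ι] [CommRing 𝕜] {s : Finset ι}
    {A B : ι → ι → 𝕜}
    (h : ∀ i ∈ s, ∀ k ∈ s, ∑ j ∈ s, A i j * B j k = (1 : Matrix ι ι 𝕜) i k) :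
    ∀ i ∈ s, ∀ k ∈ s, ∑ j ∈ s, B i j * A j k = (1 : Matrix ι ι 𝕜) i k := by
  let restrict (X : ι → ι → 𝕜) : Matrix s s 𝕜 := .of fun i k => X i k
  have hone (X Y : ι → ι → 𝕜) : restrict X * restrict Y = 1 ↔
      ∀ i ∈ s, ∀ k ∈ s, ∑ j ∈ s, X i j * Y j k = (1 : Matrix ι ι 𝕜) i k := by
    simp only [← Matrix.ext_iff, Matrix.mul_apply, restrict, Matrix.of_apply, Matrix.one_apply,
      Subtype.forall, Subtype.mk.injEq, ← Finset.sum_coe_sort s]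
  rw [← hone, mul_eq_one_comm, hone]
  exact h

/-- The values at the points `lam k` of the Gaussians generating `V²_c`: `f (lam k)` is the `k`-th
entry of `gaussMatrix c lam` applied to the coefficient sequence of `f`. -/
noncomputable def gaussMatrix (c : ℂ) (lam : ℤ → ℝ) (k n : ℤ) : ℂ :=
  Complex.exp (-c * ((lam k : ℂ) - n) ^ 2)

theorem norm_gaussMatrix (c : ℂ) (lam : ℤ → ℝ) (k n : ℤ) :
    ‖gaussMatrix c lam k n‖ = Real.exp (-c.re * (lam k - n) ^ 2) := by
  rw [gaussMatrix, Complex.norm_exp]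
  congr 1
  rw [show -c * ((lam k : ℂ) - n) ^ 2 = ((lam k - n) ^ 2 : ℝ) * -c by push_cast; ring,
    Complex.re_ofReal_mul, Complex.neg_re, mul_comm]

theorem hasExpDecay_gaussMatrix {c : ℂ} (hc : 0 ≤ c.re) {lam : ℤ → ℝ} {D : ℝ}
    (hlam : ∀ k, |lam k - k| ≤ D) :
    HasExpDecay c.re (Real.exp (c.re * (D + 1))) (gaussMatrix c lam) := by
  intro k n
  have hdist : |(k : ℝ) - n| ≤ |lam k - n| + D := by
    linarith [abs_sub_le (k : ℝ) (lam k) n, abs_sub_comm (k : ℝ) (lam k), hlam k]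
  have hsq : |lam k - n| ≤ (lam k - n) ^ 2 + 1 := by
    rw [← sq_abs]
    linarith [sq_nonneg (|lam k - n| - 1), sq_nonneg |lam k - n|]
  rw [norm_gaussMatrix, ← Real.exp_add, Real.exp_le_exp]
  linarith [mul_le_mul_of_nonneg_left (hdist.trans (add_le_add_left hsq D)) hc]

/-- The inverse of the section of `gaussMatrix c lam` on the indices `-N, …, N`, extended by zero.
As `gaussMatrix c lam k n = exp (-c λₖ²) exp (2cλₖ)ⁿ exp (-c n²)`, the section is, up to diagonal
factors, the Vandermonde matrix of the nodes `exp (2cλₖ)`, whose inverse holds the coefficients of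
the Lagrange basis polynomials. -/
noncomputable def gaussSectionInverse (c : ℂ) (lam : ℤ → ℝ) (N : ℕ) (n m : ℤ) : ℂ :=
  if n ∈ Finset.Icc (-N : ℤ) N ∧ m ∈ Finset.Icc (-N : ℤ) N then
    Complex.exp (c * ((n : ℂ) ^ 2 + (lam m : ℂ) ^ 2 + 2 * N * lam m)) *
      (Lagrange.basis (Finset.Icc (-N : ℤ) N) (fun k => Complex.exp (2 * c * lam k)) m).coeff
        (n + N).toNat
  else 0

section SectionExponent

/-- The entry `(n, m)` of `gaussSectionInverse c lam N` is bounded by a constant times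
`exp (c.re * sectionExponent lam N n m)`. The first four terms come from the diagonal factors of the
section and from estimating the coefficient of index `n + N` at radius `exp (2 * c.re * lam n)`, the
sum from the differences of the nodes. -/
noncomputable def sectionExponent (lam : ℤ → ℝ) (N n m : ℤ) : ℝ :=
  n ^ 2 + lam m ^ 2 + 2 * N * lam m - 2 * (n + N) * lam n +
    2 * ∑ k ∈ (Finset.Icc (-N) N).erase m, (max (lam n) (lam k) - max (lam m) (lam k))

variable {lam P : ℤ → ℝ} {K : ℝ} {N n m : ℤ}

theorem sectionExponent_eq (hlam : Monotone lam) (hP : ∀ k, P k = P (k - 1) + (lam k - k))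
    (hn : n ∈ Finset.Icc (-N) N) (hm : m ∈ Finset.Icc (-N) N) :
    sectionExponent lam N n m =
      (lam m - m) ^ 2 + 2 * (P m - P n) + (lam n - n) - (lam m - m) - |lam n - lam m| := by
  have hU : ∀ k : ℤ, P k + (k : ℝ) * (k + 1) / 2 =
      P (k - 1) + ((k - 1 : ℤ) : ℝ) * ((k - 1 : ℤ) + 1) / 2 + lam k := fun k => by
    rw [hP k]
    push_cast
    ring
  have hsum : ∀ j ∈ Finset.Icc (-N) N, ∑ k ∈ Finset.Icc (-N) N, max (lam j) (lam k) =
      (j + N + 1) * lam j + (P N + N * (N + 1) / 2 - (P j + j * (j + 1) / 2)) := fun j hj => by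
    rw [Finset.mem_Icc] at hj
    rw [sum_Icc_max_eq hlam hU hj.1 hj.2]
    push_cast
    ring
  have herase := Finset.add_sum_erase _ (fun k => max (lam n) (lam k) - max (lam m) (lam k)) hm
  rw [Finset.sum_sub_distrib (s := Finset.Icc (-N) N), hsum n hn, hsum m hm, max_self] at herase
  rw [sectionExponent]
  linear_combination 2 * herase - max_add_min (lam n) (lam m) - max_sub_min_eq_abs' (lam n) (lam m)

theorem sectionExponent_le (hP : IsBoundedDiscrepancy lam P K) (hlam : Monotone lam)
    (hn : n ∈ Finset.Icc (-N) N) (hm : m ∈ Finset.Icc (-N) N) :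
    sectionExponent lam N n m ≤ 4 * K ^ 2 + 12 * K - |(n : ℝ) - m| := by
  rw [sectionExponent_eq hlam hP.eq_add hn hm]
  have hn' := abs_le.1 (hP.abs_sub_le n)
  have hm' := abs_le.1 (hP.abs_sub_le m)
  have hsq : (lam m - m) ^ 2 ≤ (2 * K) ^ 2 := sq_le_sq' hm'.1 hm'.2
  have hdist : |(n : ℝ) - m| ≤ |lam n - lam m| + 4 * K :=
    calc |(n : ℝ) - m| = |(lam n - lam m) - ((lam n - n) - (lam m - m))| := by ring_nf
      _ ≤ |lam n - lam m| + (|lam n - n| + |lam m - m|) :=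
          (abs_sub _ _).trans (by gcongr; exact abs_sub _ _)
      _ ≤ |lam n - lam m| + 4 * K := by linarith [hP.abs_sub_le n, hP.abs_sub_le m]
  linarith [abs_le.1 (hP.abs_le n), abs_le.1 (hP.abs_le m)]

end SectionExponent

section GaussSections

variable {c : ℂ} {lam : ℤ → ℝ}

theorem norm_exp_two_mul (c : ℂ) (x : ℝ) :
    ‖Complex.exp (2 * c * x)‖ = Real.exp (2 * c.re * x) := by
  simp [Complex.norm_exp]

theorem exp_two_mul_injective (hc : 0 < c.re) (hlam : Function.Injective lam) :
    Function.Injective fun k => Complex.exp (2 * c * lam k) := by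
  intro j k hjk
  have h := congrArg norm hjk
  simp only [norm_exp_two_mul, Real.exp_eq_exp] at h
  exact hlam (mul_left_cancel₀ (by positivity) h)

theorem gaussMatrix_eq (c : ℂ) (lam : ℤ → ℝ) (N : ℕ) {k n : ℤ} (hn : -(N : ℤ) ≤ n) :
    gaussMatrix c lam k n = Complex.exp (-c * (lam k ^ 2 + 2 * N * lam k + n ^ 2)) *
      Complex.exp (2 * c * lam k) ^ (n + N).toNat := by
  have hcast : (((n + N).toNat : ℕ) : ℂ) = n + N := by
    rw [← Int.cast_natCast, Int.toNat_of_nonneg (by omega)]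
    push_cast
    rfl
  rw [gaussMatrix, ← Complex.exp_nat_mul, ← Complex.exp_add, hcast]
  ring_nf

theorem sum_gaussMatrix_mul_gaussSectionInverse (hc : 0 < c.re) (hlam : Function.Injective lam)
    {N : ℕ} : ∀ k ∈ Finset.Icc (-N : ℤ) N, ∀ m ∈ Finset.Icc (-N : ℤ) N,
    ∑ n ∈ Finset.Icc (-N : ℤ) N, gaussMatrix c lam k n * gaussSectionInverse c lam N n m =
      (1 : Matrix ℤ ℤ ℂ) k m := by
  intro k hk m hm
  set s := Finset.Icc (-N : ℤ) N
  set z : ℤ → ℂ := fun k => Complex.exp (2 * c * lam k)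
  have hz : Set.InjOn z s := (exp_two_mul_injective hc hlam).injOn
  have hdeg : (Lagrange.basis s z m).natDegree < 2 * N + 1 := by
    rw [Lagrange.natDegree_basis hz hm, Int.card_Icc]
    omega
  calc ∑ n ∈ s, gaussMatrix c lam k n * gaussSectionInverse c lam N n m
      = ∑ n ∈ s, Complex.exp (c * (lam m ^ 2 + 2 * N * lam m - lam k ^ 2 - 2 * N * lam k)) *
          ((Lagrange.basis s z m).coeff (n + N).toNat * z k ^ (n + N).toNat) := by
        refine Finset.sum_congr rfl fun n hn => ?_
        have hexp : Complex.exp (c * (lam m ^ 2 + 2 * N * lam m - lam k ^ 2 - 2 * N * lam k)) =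
            Complex.exp (-c * (lam k ^ 2 + 2 * N * lam k + n ^ 2)) *
              Complex.exp (c * ((n : ℂ) ^ 2 + (lam m : ℂ) ^ 2 + 2 * N * lam m)) := by
          rw [← Complex.exp_add]
          ring_nf
        rw [gaussSectionInverse, if_pos ⟨hn, hm⟩, gaussMatrix_eq c lam N (Finset.mem_Icc.1 hn).1,
          hexp]
        ring
    _ = Complex.exp (c * (lam m ^ 2 + 2 * N * lam m - lam k ^ 2 - 2 * N * lam k)) *
          (Lagrange.basis s z m).eval (z k) := by
        rw [← Finset.mul_sum, sum_Icc_coeff_mul_pow_eq_eval hdeg]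
    _ = (1 : Matrix ℤ ℤ ℂ) k m := by
        rcases eq_or_ne k m with rfl | hkm
        · rw [Lagrange.eval_basis_self hz hm, Matrix.one_apply_eq]
          ring_nf
          exact Complex.exp_zero
        · rw [Lagrange.eval_basis_of_ne hkm.symm hk, Matrix.one_apply_ne hkm, mul_zero]

theorem norm_gaussSectionInverse_le (hc : 0 < c.re) {ε : ℝ} (hε : 0 < ε)
    (hsep : ∀ j k : ℤ, ε * |(j : ℝ) - k| ≤ |lam j - lam k|) {N : ℕ} {n m : ℤ}
    (hn : n ∈ Finset.Icc (-N : ℤ) N) (hm : m ∈ Finset.Icc (-N : ℤ) N) :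
    ‖gaussSectionInverse c lam N n m‖ ≤ Real.exp (c.re * sectionExponent lam N n m +
      (expSum (2 * c.re * ε) + expSum (2 * c.re * ε) / (1 - Real.exp (-(2 * c.re * ε))))) := by
  have hc₂ : 0 < 2 * c.re := by positivity
  have hsep' : ∀ j k : ℤ, 2 * c.re * ε * |(j : ℝ) - k| ≤
      |2 * c.re * lam j - 2 * c.re * lam k| := fun j k => by
    rw [← mul_sub, abs_mul, abs_of_pos hc₂, mul_assoc]
    exact mul_le_mul_of_nonneg_left (hsep j k) hc₂.le
  have hcoeff := norm_coeff_basis_mul_exp_le (mul_pos hc₂ hε) hsep'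
    (fun k => norm_exp_two_mul c (lam k)) (Finset.Icc (-N : ℤ) N) n m (n + N).toNat
  have hcast : (((n + N).toNat : ℕ) : ℝ) = n + N := by
    rw [← Int.cast_natCast, Int.toNat_of_nonneg (by linarith [(Finset.mem_Icc.1 hn).1])]
    push_cast
    rfl
  have hdiag : ‖Complex.exp (c * ((n : ℂ) ^ 2 + (lam m : ℂ) ^ 2 + 2 * N * lam m))‖ =
      Real.exp (c.re * (n ^ 2 + lam m ^ 2 + 2 * N * lam m)) := by
    rw [Complex.norm_exp, ← Complex.re_mul_ofReal]
    push_cast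
    rfl
  simp only [← mul_max_of_nonneg _ _ hc₂.le, ← mul_sub, ← Finset.mul_sum, hcast] at hcoeff
  rw [← le_div_iff₀ (Real.exp_pos _), ← Real.exp_sub] at hcoeff
  rw [gaussSectionInverse, if_pos ⟨hn, hm⟩, norm_mul, hdiag]
  refine (mul_le_mul_of_nonneg_left hcoeff (Real.exp_pos _).le).trans_eq ?_
  rw [← Real.exp_add, sectionExponent]
  push_cast
  ring_nf

theorem exists_hasExpDecay_gaussSectionInverse (hc : 0 < c.re) {P : ℤ → ℝ} {K ε : ℝ}
    (hP : IsBoundedDiscrepancy lam P K) (hlam : Monotone lam) (hε : 0 < ε)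
    (hsep : ∀ j k : ℤ, ε * |(j : ℝ) - k| ≤ |lam j - lam k|) :
    ∃ D, ∀ N, HasExpDecay c.re D (gaussSectionInverse c lam N) := by
  refine ⟨Real.exp (c.re * (4 * K ^ 2 + 12 * K) + (expSum (2 * c.re * ε) +
    expSum (2 * c.re * ε) / (1 - Real.exp (-(2 * c.re * ε))))), fun N n m => ?_⟩
  by_cases h : n ∈ Finset.Icc (-N : ℤ) N ∧ m ∈ Finset.Icc (-N : ℤ) N
  · refine (norm_gaussSectionInverse_le hc hε hsep h.1 h.2).trans ?_
    rw [← Real.exp_add, Real.exp_le_exp]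
    linarith [mul_le_mul_of_nonneg_left (sectionExponent_le hP hlam h.1 h.2) hc.le]
  · rw [gaussSectionInverse, if_neg h, norm_zero]
    positivity

theorem eventually_mem_Icc_neg_and_mem_Icc_neg (i k : ℤ) :
    ∀ᶠ N : ℕ in atTop, i ∈ Finset.Icc (-N : ℤ) N ∧ k ∈ Finset.Icc (-N : ℤ) N := by
  filter_upwards [eventually_ge_atTop i.natAbs, eventually_ge_atTop k.natAbs] with N hi hk
  simp only [Finset.mem_Icc]
  omega

theorem exists_inverse_gaussMatrix (hc : 0 < c.re) {P : ℤ → ℝ} {K ε : ℝ}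
    (hP : IsBoundedDiscrepancy lam P K) (hε : 0 < ε) (hstep : ∀ j, lam j + ε ≤ lam (j + 1)) :
    ∃ (C D : ℝ) (Q : ℤ → ℤ → ℂ), HasExpDecay c.re C (gaussMatrix c lam) ∧ HasExpDecay c.re D Q ∧
      MulEqOne (gaussMatrix c lam) Q ∧ MulEqOne Q (gaussMatrix c lam) := by
  have hlam : StrictMono lam := strictMono_int_of_lt_succ fun j => by linarith [hstep j]
  have hA := hasExpDecay_gaussMatrix hc.le hP.abs_sub_le
  obtain ⟨D, hB⟩ := exists_hasExpDecay_gaussSectionInverse hc hP hlam.monotone hε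
    (mul_abs_sub_le_abs_sub_of_add_le hstep)
  have hsec := fun N => sum_gaussMatrix_mul_gaussSectionInverse hc hlam.injective (N := N)
  obtain ⟨Q, hQ, hAQ, hQA⟩ := hA.exists_inverse_of_eventually hc hB
    (fun i k => (eventually_mem_Icc_neg_and_mem_Icc_neg i k).mono fun N h => by
      rw [← hsec N i h.1 k h.2]
      refine tsum_eq_sum fun n hn => ?_
      rw [gaussSectionInverse, if_neg fun h' => hn h'.1, mul_zero])
    (fun i k => (eventually_mem_Icc_neg_and_mem_Icc_neg i k).mono fun N h => by
      rw [← sum_mul_eq_one_comm (hsec N) i h.1 k h.2]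
      refine tsum_eq_sum fun n hn => ?_
      rw [gaussSectionInverse, if_neg fun h' => hn h'.2, zero_mul])
  exact ⟨_, D, Q, hA, hQ, hAQ, hQA⟩

end GaussSections

end FiniteSections

section CompleteInterpolation

variable {c : ℂ} {lam : ℤ → ℝ} {a C D : ℝ} {Q : ℤ → ℤ → ℂ}

theorem gaussShiftSum_eq_tsum_gaussMatrix (c : ℂ) (lam : ℤ → ℝ) (coef : ℤ → ℂ) (k : ℤ) :
    gaussShiftSum c coef (lam k) = ∑' n, gaussMatrix c lam k n * coef n := by
  simp only [gaussShiftSum, gaussMatrix, mul_comm]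

theorem isSamplingV2_range (hlam : Function.Injective lam) (ha : 0 < a)
    (hA : HasExpDecay a C (gaussMatrix c lam)) (hQ : HasExpDecay a D Q)
    (hQA : MulEqOne Q (gaussMatrix c lam)) : IsSamplingV2 c (Set.range lam) := by
  refine ⟨((D * expSum a) ^ 2 + 1)⁻¹, by positivity, (C * expSum a) ^ 2 + 1, by positivity,
    fun coef hcoef => ?_⟩
  obtain ⟨hval, hvalle⟩ := hA.summable_and_tsum_norm_sq_le ha hcoef
  have hle := (hQ.summable_and_tsum_norm_sq_le ha hval).2
  simp only [hQ.tsum_mul_tsum_mul_eq_self hA ha hQA hcoef] at hle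
  have hrange : ∑' x : Set.range lam, ‖gaussShiftSum c coef x‖ ^ 2 =
      ∑' k, ‖∑' n, gaussMatrix c lam k n * coef n‖ ^ 2 := by
    rw [← (Equiv.ofInjective lam hlam).tsum_eq]
    simp only [Equiv.ofInjective_apply, gaussShiftSum_eq_tsum_gaussMatrix]
  have hval₀ : 0 ≤ ∑' k, ‖∑' n, gaussMatrix c lam k n * coef n‖ ^ 2 :=
    tsum_nonneg fun k => sq_nonneg _
  have hcoef₀ : 0 ≤ ∑' n, ‖coef n‖ ^ 2 := tsum_nonneg fun n => sq_nonneg _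
  rw [hrange, inv_mul_le_iff₀ (by positivity)]
  constructor <;> linarith

theorem isInterpolatingV2_range (hlam : Function.Injective lam) (ha : 0 < a)
    (hA : HasExpDecay a C (gaussMatrix c lam)) (hQ : HasExpDecay a D Q)
    (hAQ : MulEqOne (gaussMatrix c lam) Q) : IsInterpolatingV2 c (Set.range lam) := by
  intro y hy
  let e := Equiv.ofInjective lam hlam
  have hye : Summable fun k => ‖y (e k)‖ ^ 2 := e.summable_iff.2 hy
  refine ⟨fun n => ∑' k, Q n k * y (e k), (hQ.summable_and_tsum_norm_sq_le ha hye).1, ?_⟩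
  rw [e.surjective.forall]
  intro k
  exact (gaussShiftSum_eq_tsum_gaussMatrix c lam _ k).trans
    (hA.tsum_mul_tsum_mul_eq_self hQ ha hAQ hye k)

end CompleteInterpolation

theorem IsSeparatedSet.exists_add_le_of_strictMono {Λ : Set ℝ} (hΛ : IsSeparatedSet Λ)
    {lam : ℤ → ℝ} (hlam : StrictMono lam) (hmem : ∀ k, lam k ∈ Λ) :
    ∃ ε > 0, ∀ j, lam j + ε ≤ lam (j + 1) := by
  obtain ⟨ε, hε, hsep⟩ := hΛ
  refine ⟨ε, hε, fun j => ?_⟩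
  have hlt := hlam (lt_add_one j)
  have h := hsep _ (hmem (j + 1)) _ (hmem j) hlt.ne'
  rw [abs_of_pos (sub_pos.2 hlt)] at h
  linarith

theorem statement1_general (c : ℂ) (hc : 0 < c.re) (Λ : Set ℝ)
    (hsep : IsSeparatedSet Λ) (hdens : 1 < lowerBeurlingDensity Λ) :
    ∃ Λ' ⊆ Λ, IsCompleteInterpolatingV2 c Λ' := by
  obtain ⟨lam, P, K, hlam, hmem, hP⟩ := exists_strictMono_isBoundedDiscrepancy hdens
  obtain ⟨ε, hε, hstep⟩ := hsep.exists_add_le_of_strictMono hlam hmem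
  obtain ⟨C, D, Q, hA, hQ, hAQ, hQA⟩ := exists_inverse_gaussMatrix hc hP hε hstep
  exact ⟨Set.range lam, Set.range_subset_iff.2 hmem,
    isSamplingV2_range hlam.injective hc hA hQ hQA,
    isInterpolatingV2_range hlam.injective hc hA hQ hAQ⟩

/-- every separated `Λ ⊂ ℝ` with `D⁻(Λ) > 1` contains a complete
interpolating sequence for `V²_a`. -/
theorem statement1 (a : ℝ) (ha : 0 < a) (Λ : Set ℝ)
    (hsep : IsSeparatedSet Λ) (hdens : 1 < lowerBeurlingDensity Λ) :
    ∃ Λ' ⊆ Λ, IsCompleteInterpolatingV2 (a : ℂ) Λ' :=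
  statement1_general a (by rwa [Complex.ofReal_re]) Λ hsep hdens
end
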